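/- arXiv:2507.01566 — 5 statements merged into one kernel-verified Lean document; each statement's English description precedes it below -/
import Mathlib

section
/- For every H₀ ∈ 𝓗 there exist a sequence (π_n)_{n≥0} of affine lines in ℝ², a sequence (H_n)_{n≥1} of non-degenerate centrally symmetric convex hexagons, and positive reals (a_n)_{n≥1}, (b_n)_{n≥1} such that: H₁ = S_{π₀}(H₀) and H_{n+1} = S_{π_n}(H_n) for all n ≥ 1; |H_n| = |H₀| for all n ≥ 1; each H_n has two opposite sides of common length b_n and four remaining sides of common length a_n; and for all n ≥ 1 the inequalities (i) 4a_{n+1} + 2b_{n+1} ≤ 4a_n + 2b_n, (ii) 2a_{n+1} ≤ a_n + b_n, and (iii) b_{n+1} ≤ a_n hold. -/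
open MeasureTheory Metric Filter Real Set
open scoped Topology ENNReal NNReal RealInnerProductSpace

noncomputable section

/-- The Euclidean plane. -/
abbrev E2 : Type := EuclideanSpace ℝ (Fin 2)

/-- The line through `x` with direction `v`. -/
def lineThrough (x v : E2) : Set E2 := {y : E2 | ∃ t : ℝ, y = x + t • v}

/-- Steiner symmetrization of `A` with respect to the affine line `{x | ⟪x, v⟫ = c}`,
where `v` is a unit normal vector of the line. -/
def steiner (v : E2) (c : ℝ) (A : Set E2) : Set E2 :=
  {y : E2 | ∃ x : E2, ⟪x, v⟫ = c ∧ (A ∩ lineThrough x v).Nonempty ∧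
    ∃ r : ℝ, y = x + r • v ∧
      ENNReal.ofReal (2 * |r|) ≤ μH[1] (A ∩ lineThrough x v)}

/-- The class `𝓗` of centrally symmetric convex hexagons (possibly degenerated to
parallelograms), i.e. the convex polygons tiling the plane by translations. -/
def Hex (H : Set E2) : Prop :=
  (∃ x₀ p q r : E2, H = (fun y => x₀ + y) '' convexHull ℝ ({p, q, r, -p, -q, -r} : Set E2)) ∧
  (interior H).Nonempty

/-- The `k`-th vertex of the standard regular hexagon. -/
def hexVertex (k : ℕ) : E2 :=
  (WithLp.equiv 2 (Fin 2 → ℝ)).symm ![Real.cos (k * π / 3), Real.sin (k * π / 3)]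

/-- The standard regular hexagon, with vertices `(cos (kπ/3), sin (kπ/3))`, `k = 0, …, 5`. -/
def stdHexagon : Set E2 := convexHull ℝ (Set.range fun k : Fin 6 => hexVertex k)

/-- A similarity of the plane (composition of a rotation, a dilation and a translation,
possibly with a reflection). -/
def IsSimilarity (f : E2 → E2) : Prop :=
  ∃ s : ℝ, 0 < s ∧ ∀ x y, dist (f x) (f y) = s * dist x y

/-- A regular hexagon is any image of the standard one under a similarity. -/
def IsRegularHexagon (H : Set E2) : Prop := ∃ f : E2 → E2, IsSimilarity f ∧ H = f '' stdHexagon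

/-- Convergence of a sequence of sets in the Hausdorff distance. -/
def HausdorffTendsto (Hn : ℕ → Set E2) (H : Set E2) : Prop :=
  Tendsto (fun n => EMetric.hausdorffEdist (Hn n) H) atTop (𝓝 0)

/-- The planar cross product (determinant) of two vectors. -/
def det2 (u w : E2) : ℝ := u 0 * w 1 - u 1 * w 0

/-- `A, B, C, D, E, F` are (consecutive) vertices of the centrally symmetric hexagon `H`:
`H` is their convex hull, `D, E, F` are the antipodes of `A, B, C` with respect to a center
`o`, and `H` has nonempty interior. -/
def HexWithVertices (A B C D E F : E2) (H : Set E2) : Prop :=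
  H = convexHull ℝ ({A, B, C, D, E, F} : Set E2) ∧
  (∃ o : E2, D = (2:ℝ) • o - A ∧ E = (2:ℝ) • o - B ∧ F = (2:ℝ) • o - C) ∧
  (interior H).Nonempty

/-- The vertices `A, B, C, D, E, F` are listed in counterclockwise order. -/
def CCWList (A B C D E F : E2) : Prop :=
  0 ≤ det2 (B - A) (C - B) ∧ 0 ≤ det2 (C - B) (D - C) ∧ 0 ≤ det2 (D - C) (E - D) ∧
  0 ≤ det2 (E - D) (F - E) ∧ 0 ≤ det2 (F - E) (A - F) ∧ 0 ≤ det2 (A - F) (B - A)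

/-- The six vertices are distinct and no three of them are collinear. -/
def NondegenerateHex (A B C D E F : E2) : Prop :=
  [A, B, C, D, E, F].Pairwise (· ≠ ·) ∧
  ∀ P Q R : E2, P ∈ ({A, B, C, D, E, F} : Set E2) → Q ∈ ({A, B, C, D, E, F} : Set E2) →
    R ∈ ({A, B, C, D, E, F} : Set E2) → P ≠ Q → P ≠ R → Q ≠ R →
      ¬ Collinear ℝ ({P, Q, R} : Set E2)

/-- The closed centrally symmetric hexagon with centre `o` spanned by `±p, ±q, ±r`. -/
def centralHull (o p q r : E2) : Set E2 :=
  {y | ∃ a b c : ℝ, |a| + |b| + |c| ≤ 1 ∧ y = o + (a • p + b • q + c • r)}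

/-- `p, q, r, -p, -q, -r` is a counterclockwise list of vertices of a convex hexagon, strictly
convex at `±q`. -/
structure ConvexPosition (p q r : E2) : Prop where
  pos : 0 < det2 p r
  mid : det2 p r < det2 p q + det2 q r
  left : det2 q r ≤ det2 p q + det2 p r
  right : det2 p q ≤ det2 q r + det2 p r

/-- `p, q, r, -p, -q, -r` is a counterclockwise list of vertices of a strictly convex hexagon. -/
structure StrictConvexPosition (p q r : E2) : Prop where
  pos : 0 < det2 p r
  mid : det2 p r < det2 p q + det2 q r
  left : det2 q r < det2 p q + det2 p r
  right : det2 p q < det2 q r + det2 p r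

lemma StrictConvexPosition.convexPosition {p q r : E2} (h : StrictConvexPosition p q r) :
    ConvexPosition p q r :=
  ⟨h.pos, h.mid, h.left.le, h.right.le⟩

lemma E2.ext_coord {x y : E2} (h0 : x 0 = y 0) (h1 : x 1 = y 1) : x = y := by
  ext i
  fin_cases i
  · exact h0
  · exact h1

lemma convex_centralHull (o p q r : E2) : Convex ℝ (centralHull o p q r) := by
  rintro x ⟨a, b, c, h, rfl⟩ y ⟨a', b', c', h', rfl⟩ s t hs ht hst
  refine ⟨s * a + t * a', s * b + t * b', s * c + t * c', ?_, ?_⟩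
  · have key : ∀ e f : ℝ, |s * e + t * f| ≤ s * |e| + t * |f| := fun e f =>
      (abs_add_le _ _).trans (by rw [abs_mul, abs_mul, abs_of_nonneg hs, abs_of_nonneg ht])
    nlinarith [key a a', key b b', key c c']
  · have ho : o = s • o + t • o := by rw [← add_smul, hst, one_smul]
    nth_rw 3 [ho]
    module

lemma convexHull_eq_centralHull (o p q r : E2) :
    convexHull ℝ ({o + p, o + q, o + r, o - p, o - q, o - r} : Set E2) = centralHull o p q r := by
  apply Subset.antisymm
  · refine convexHull_min ?_ (convex_centralHull o p q r)
    rintro y (rfl | rfl | rfl | rfl | rfl | rfl)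
    · exact ⟨1, 0, 0, by norm_num, by module⟩
    · exact ⟨0, 1, 0, by norm_num, by module⟩
    · exact ⟨0, 0, 1, by norm_num, by module⟩
    · exact ⟨-1, 0, 0, by norm_num, by module⟩
    · exact ⟨0, -1, 0, by norm_num, by module⟩
    · exact ⟨0, 0, -1, by norm_num, by module⟩
  · rintro y ⟨a, b, c, h, rfl⟩
    set S : Set E2 := {o + p, o + q, o + r, o - p, o - q, o - r} with hS
    let d : ℝ := (1 - (|a| + |b| + |c|)) / 2
    let wt : Fin 6 → ℝ := ![(|a| + a) / 2 + d, (|b| + b) / 2, (|c| + c) / 2,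
      (|a| - a) / 2 + d, (|b| - b) / 2, (|c| - c) / 2]
    let pt : Fin 6 → E2 := ![o + p, o + q, o + r, o - p, o - q, o - r]
    have hd : 0 ≤ d := by simp only [d]; linarith
    have hmem := (convex_convexHull ℝ S).sum_mem (t := Finset.univ) (w := wt) (z := pt)
      (by
        intro i _
        have := neg_abs_le a
        have := neg_abs_le b
        have := neg_abs_le c
        have := le_abs_self a
        have := le_abs_self b
        have := le_abs_self c
        fin_cases i <;> simp [wt] <;> linarith)
      (by simp [Fin.sum_univ_six, wt, d]; ring)
      (by
        intro i _
        apply subset_convexHull ℝ S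
        fin_cases i <;> simp [pt, hS])
    convert hmem using 1
    simp only [Fin.sum_univ_six, wt, pt, d, Matrix.cons_val]
    module

lemma centralHull_subset {o p q r p' q' r' : E2} (hp : o + p ∈ centralHull o p' q' r')
    (hq : o + q ∈ centralHull o p' q' r') (hr : o + r ∈ centralHull o p' q' r') :
    centralHull o p q r ⊆ centralHull o p' q' r' := by
  have hneg : ∀ z : E2, o + z ∈ centralHull o p' q' r' → o - z ∈ centralHull o p' q' r' := by
    rintro z ⟨a, b, c, h, hz⟩
    refine ⟨-a, -b, -c, by simpa using h, ?_⟩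
    rw [add_left_cancel hz]
    module
  rw [← convexHull_eq_centralHull o p q r]
  refine convexHull_min ?_ (convex_centralHull o p' q' r')
  rintro y (rfl | rfl | rfl | rfl | rfl | rfl)
  exacts [hp, hq, hr, hneg _ hp, hneg _ hq, hneg _ hr]

lemma image_convexHull_eq_centralHull (o p q r : E2) :
    (fun y => o + y) '' convexHull ℝ ({p, q, r, -p, -q, -r} : Set E2) = centralHull o p q r := by
  have h := convexHull_eq_centralHull 0 p q r
  simp only [zero_add, zero_sub] at h
  rw [h]
  ext y
  constructor
  · rintro ⟨_, ⟨a, b, c, h, rfl⟩, rfl⟩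
    exact ⟨a, b, c, h, by simp⟩
  · rintro ⟨a, b, c, h, rfl⟩
    exact ⟨_, ⟨a, b, c, h, rfl⟩, by simp⟩

lemma det2_smul_eq (p q r : E2) :
    det2 p r • q = det2 q r • p + det2 p q • r := by
  apply E2.ext_coord <;> simp [det2] <;> ring

/-- A hexagon is the intersection of the three strips bounded by its opposite sides. -/
lemma mem_centralHull_iff {o p q r : E2} (h : ConvexPosition p q r) (y : E2) :
    y ∈ centralHull o p q r ↔ |det2 (y - o) (q - p)| ≤ det2 p q ∧
      |det2 (y - o) (r - q)| ≤ det2 q r ∧ |det2 (y - o) (p + r)| ≤ det2 p r := by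
  obtain ⟨hz, hm, hl, hr⟩ := h
  constructor
  · rintro ⟨a, b, c, habc, rfl⟩
    have e1 : det2 (o + (a • p + b • q + c • r) - o) (q - p)
        = a * det2 p q + b * det2 p q + c * (det2 p r - det2 q r) := by
      simp [det2]; ring
    have e2 : det2 (o + (a • p + b • q + c • r) - o) (r - q)
        = a * (det2 p r - det2 p q) + b * det2 q r + c * det2 q r := by
      simp [det2]; ring
    have e3 : det2 (o + (a • p + b • q + c • r) - o) (p + r)
        = a * det2 p r + b * (det2 q r - det2 p q) + c * - det2 p r := by
      simp [det2]; ring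
    have key : ∀ f g k M : ℝ, |f| ≤ M → |g| ≤ M → |k| ≤ M → |a * f + b * g + c * k| ≤ M := by
      intro f g k M hf hg hk
      have h1 := abs_add_three (a * f) (b * g) (c * k)
      rw [abs_mul, abs_mul, abs_mul] at h1
      nlinarith [abs_nonneg a, abs_nonneg b, abs_nonneg c, abs_nonneg f]
    rw [e1, e2, e3]
    refine ⟨key _ _ _ _ ?_ ?_ ?_, key _ _ _ _ ?_ ?_ ?_, key _ _ _ _ ?_ ?_ ?_⟩ <;>
      rw [abs_le] <;> constructor <;> linarith
  · rintro ⟨h1, h2, h3⟩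
    obtain ⟨Y, rfl⟩ : ∃ Y, y = o + Y := ⟨y - o, by abel⟩
    simp only [add_sub_cancel_left] at h1 h2 h3
    rw [abs_le] at h1 h2 h3
    set x := det2 p q
    set w := det2 q r
    set z := det2 p r
    set α := det2 Y r / z
    set β := det2 p Y / z
    have hαz : α * z = det2 Y r := div_mul_cancel₀ _ hz.ne'
    have hβz : β * z = det2 p Y := div_mul_cancel₀ _ hz.ne'
    have hY : Y = α • p + β • r := by
      have h4 := det2_smul_eq p Y r
      change z • Y = _ at h4
      rw [← hαz, ← hβz] at h4
      have : z • Y = z • (α • p + β • r) := by rw [h4]; module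
      exact smul_right_injective E2 hz.ne' this
    have hq : z • q = w • p + x • r := det2_smul_eq p q r
    have e1 : det2 Y (q - p) = α * x + β * (z - w) := by
      rw [hY]; simp [det2, x, w, z]; ring
    have e2 : det2 Y (r - q) = α * (z - x) + β * w := by
      rw [hY]; simp [det2, x, w, z]; ring
    have e3 : det2 Y (p + r) = α * z - β * z := by
      rw [hY]; simp [det2, z]; ring
    rw [e1] at h1
    rw [e2] at h2
    rw [e3] at h3
    have h3a : α - β ≤ 1 := by nlinarith
    have h3b : -1 ≤ α - β := by nlinarith
    have hpos : 0 < x + w - z := by linarith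
    have tri : ∀ α β : ℝ, 1 < α + β → α * x + β * (z - w) ≤ x → α * (z - x) + β * w ≤ w →
        ∃ a b c : ℝ, |a| + |b| + |c| ≤ 1 ∧ α • p + β • r = a • p + b • q + c • r := by
      intro α β h h1 h2
      obtain ⟨g, hg⟩ : ∃ g, g * (x + w - z) = α + β - 1 := ⟨_, div_mul_cancel₀ _ hpos.ne'⟩
      have hg0 : 0 ≤ g := by
        by_contra hneg
        nlinarith
      refine ⟨α - g * w, g * z, β - g * x, ?_, ?_⟩
      · have ha : 0 ≤ α - g * w := by
          have : 0 ≤ (α - g * w) * (x + w - z) := by linear_combination h2 + w * hg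
          exact nonneg_of_mul_nonneg_left this hpos
        have hc : 0 ≤ β - g * x := by
          have : 0 ≤ (β - g * x) * (x + w - z) := by linear_combination h1 + x * hg
          exact nonneg_of_mul_nonneg_left this hpos
        rw [abs_of_nonneg ha, abs_of_nonneg hc, abs_of_nonneg (by positivity)]
        linarith
      · rw [mul_smul, hq]
        module
    by_cases hc1 : 1 < α + β
    · obtain ⟨a, b, c, habc, he⟩ := tri α β hc1 h1.2 h2.2
      exact ⟨a, b, c, habc, by rw [hY, he]⟩
    by_cases hc2 : α + β < -1
    · obtain ⟨a, b, c, habc, he⟩ := tri (-α) (-β) (by linarith) (by linarith) (by linarith)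
      refine ⟨-a, -b, -c, by simpa using habc, ?_⟩
      rw [hY]
      congr 1
      calc α • p + β • r = - ((-α) • p + (-β) • r) := by module
        _ = _ := by rw [he]; module
    refine ⟨α, 0, β, ?_, by rw [hY]; module⟩
    rcases abs_cases α with ⟨ha, _⟩ | ⟨ha, _⟩ <;> rcases abs_cases β with ⟨hb, _⟩ | ⟨hb, _⟩ <;>
      rw [ha, hb, abs_zero] <;> linarith

lemma continuous_det2_left (w : E2) : Continuous fun y : E2 => det2 y w := by
  unfold det2
  fun_prop

lemma interior_centralHull_nonempty {o p q r : E2} (h : StrictConvexPosition p q r) :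
    (interior (centralHull o p q r)).Nonempty := by
  have hc : ∀ w : E2, Continuous fun y : E2 => |det2 (y - o) w| := fun w =>
    ((continuous_det2_left w).comp (continuous_id.sub continuous_const)).abs
  refine ⟨o, mem_interior.2 ⟨{y | |det2 (y - o) (q - p)| < det2 p q} ∩
    ({y | |det2 (y - o) (r - q)| < det2 q r} ∩ {y | |det2 (y - o) (p + r)| < det2 p r}),
    ?_, ?_, ?_⟩⟩
  · rintro y ⟨h1, h2, h3⟩
    exact (mem_centralHull_iff h.convexPosition y).2 ⟨h1.le, h2.le, h3.le⟩
  · exact (isOpen_lt (hc _) continuous_const).inter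
      ((isOpen_lt (hc _) continuous_const).inter (isOpen_lt (hc _) continuous_const))
  · have h0 : ∀ w : E2, det2 (o - o) w = 0 := fun w => by simp [det2]
    obtain ⟨h1, h2, h3, h4⟩ := h
    refine ⟨?_, ?_, ?_⟩ <;> simp only [mem_ofPred_eq, h0, abs_zero] <;> linarith

/-- The vector with coordinates `s, t` in the positively oriented frame with second vector `v`. -/
def frame (v : E2) (s t : ℝ) : E2 := !₂[s * v 1 + t * v 0, -(s * v 0) + t * v 1]

lemma sq_add_sq_of_norm_eq_one {v : E2} (hv : ‖v‖ = 1) : v 0 ^ 2 + v 1 ^ 2 = 1 := by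
  have := EuclideanSpace.real_norm_sq_eq v
  rw [hv, Fin.sum_univ_two] at this
  linarith

lemma inner_eq (x y : E2) : ⟪x, y⟫ = x 0 * y 0 + x 1 * y 1 := by
  simp [PiLp.inner_apply, Fin.sum_univ_two]
  ring

lemma eq_frame {v : E2} (hv : ‖v‖ = 1) (y : E2) : y = frame v (det2 y v) ⟪y, v⟫ := by
  have h := sq_add_sq_of_norm_eq_one hv
  apply E2.ext_coord <;> simp only [frame, det2, inner_eq] <;> simp
  · linear_combination -(y 0) * h
  · linear_combination -(y 1) * h

lemma det2_frame {v : E2} (hv : ‖v‖ = 1) (s t s' t' : ℝ) :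
    det2 (frame v s t) (frame v s' t') = s * t' - t * s' := by
  have h := sq_add_sq_of_norm_eq_one hv
  simp only [frame, det2]
  simp
  linear_combination (s * t' - t * s') * h

lemma frame_sub (v : E2) (s t s' t' : ℝ) :
    frame v s t - frame v s' t' = frame v (s - s') (t - t') := by
  apply E2.ext_coord <;> simp [frame] <;> ring

lemma frame_add (v : E2) (s t s' t' : ℝ) :
    frame v s t + frame v s' t' = frame v (s + s') (t + t') := by
  apply E2.ext_coord <;> simp [frame] <;> ring

lemma norm_frame {v : E2} (hv : ‖v‖ = 1) (s t : ℝ) : ‖frame v s t‖ = √(s ^ 2 + t ^ 2) := by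
  have h := sq_add_sq_of_norm_eq_one hv
  rw [EuclideanSpace.norm_eq, Fin.sum_univ_two]
  congr 1
  simp [frame]
  linear_combination (s ^ 2 + t ^ 2) * h

/-- The set whose slice in direction `v` at abscissa `s`, `|s| ≤ S`, is the segment with midpoint
`m s` and half-length `W s`. -/
def slicedSet (v o : E2) (S : ℝ) (m W : ℝ → ℝ) : Set E2 :=
  {y | |det2 (y - o) v| ≤ S ∧ |⟪y - o, v⟫ - m (det2 (y - o) v)| ≤ W (det2 (y - o) v)}

lemma hausdorffMeasure_image_Icc {v : E2} (hv : ‖v‖ = 1) (x : E2) {m w : ℝ} (hw : 0 ≤ w) :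
    μH[1] {y : E2 | ∃ t : ℝ, y = x + t • v ∧ |t - m| ≤ w} = ENNReal.ofReal (2 * w) := by
  have hset : {y : E2 | ∃ t : ℝ, y = x + t • v ∧ |t - m| ≤ w} =
      segment ℝ (x + (m - w) • v) (x + (m + w) • v) := by
    have himg : {y : E2 | ∃ t : ℝ, y = x + t • v ∧ |t - m| ≤ w} =
        AffineMap.lineMap x (x + v) '' Icc (m - w) (m + w) := by
      ext y
      constructor
      · rintro ⟨t, rfl, ht⟩
        rw [abs_le] at ht
        exact ⟨t, ⟨by linarith, by linarith⟩, by simp [AffineMap.lineMap_apply, add_comm]⟩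
      · rintro ⟨t, ⟨h1, h2⟩, rfl⟩
        exact ⟨t, by simp [AffineMap.lineMap_apply, add_comm],
          abs_le.2 ⟨by linarith, by linarith⟩⟩
    rw [himg, ← segment_eq_Icc (by linarith : m - w ≤ m + w), image_segment]
    simp [AffineMap.lineMap_apply, add_comm]
  rw [hset, hausdorffMeasure_segment, edist_dist, dist_eq_norm]
  congr 1
  have : x + (m - w) • v - (x + (m + w) • v) = (-(2 * w)) • v := by module
  rw [this, norm_smul, hv, Real.norm_eq_abs, abs_neg, abs_of_nonneg (by linarith), mul_one]

lemma steiner_slicedSet {v : E2} (hv : ‖v‖ = 1) (o : E2) {S : ℝ} {m W : ℝ → ℝ}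
    (hW : ∀ s, |s| ≤ S → 0 ≤ W s) :
    steiner v ⟪o, v⟫ (slicedSet v o S m W) = slicedSet v o S 0 W := by
  have hdet : ∀ (x : E2) (t : ℝ), det2 (x + t • v - o) v = det2 (x - o) v := by
    intro x t
    simp [det2]
    ring
  have hinner : ∀ (x : E2) (t : ℝ), ⟪x, v⟫ = ⟪o, v⟫ → ⟪x + t • v - o, v⟫ = t := by
    intro x t hx
    rw [inner_sub_left, inner_add_left, hx, real_inner_smul_left, real_inner_self_eq_norm_sq, hv]
    ring
  have hline : ∀ x : E2, ⟪x, v⟫ = ⟪o, v⟫ → |det2 (x - o) v| ≤ S →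
      μH[1] (slicedSet v o S m W ∩ lineThrough x v) =
        ENNReal.ofReal (2 * W (det2 (x - o) v)) := by
    intro x hx hS
    rw [← hausdorffMeasure_image_Icc hv x (m := m (det2 (x - o) v)) (hW _ hS)]
    congr 1
    ext y
    constructor
    · rintro ⟨⟨_, h⟩, t, rfl⟩
      rw [hdet, hinner x t hx] at h
      exact ⟨t, rfl, h⟩
    · rintro ⟨t, rfl, h⟩
      refine ⟨⟨?_, ?_⟩, t, rfl⟩
      · rwa [hdet]
      · rwa [hdet, hinner x t hx]
  ext y
  constructor
  · rintro ⟨x, hx, ⟨_, ⟨hS, _⟩, t, rfl⟩, r, rfl, hr⟩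
    rw [hdet] at hS
    rw [hline x hx hS, ENNReal.ofReal_le_ofReal_iff (by linarith [hW _ hS])] at hr
    refine ⟨by rwa [hdet], ?_⟩
    rw [hdet, hinner x r hx, Pi.zero_apply, sub_zero]
    linarith
  · rintro ⟨hS, h⟩
    rw [Pi.zero_apply, sub_zero] at h
    set t := ⟪y - o, v⟫ with ht
    have hx : ⟪y - t • v, v⟫ = ⟪o, v⟫ := by
      rw [inner_sub_left, real_inner_smul_left, real_inner_self_eq_norm_sq, hv, ht,
        inner_sub_left]
      ring
    have hdy : det2 (y - t • v - o) v = det2 (y - o) v := by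
      rw [← hdet (y - t • v) t, sub_add_cancel]
    refine ⟨y - t • v, hx, ?_, t, by abel, ?_⟩
    · refine ⟨y - t • v + m (det2 (y - o) v) • v, ⟨?_, ?_⟩, _, rfl⟩
      · rwa [hdet, hdy]
      · rw [hdet, hdy, hinner _ _ hx, sub_self, abs_zero]
        exact hW _ hS
    · rw [hline _ hx (by rwa [hdy]), hdy]
      exact ENNReal.ofReal_le_ofReal (by linarith)

lemma measurePreserving_det2_inner {v : E2} (hv : ‖v‖ = 1) (o : E2) :
    MeasurePreserving (fun y : E2 => (det2 (y - o) v, ⟪y - o, v⟫)) := by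
  let l : E2 →ₗ[ℝ] E2 :=
    { toFun := fun y => !₂[det2 y v, ⟪y, v⟫]
      map_add' := fun x y => by
        apply E2.ext_coord <;> simp [det2, inner_eq] <;> ring
      map_smul' := fun t y => by
        apply E2.ext_coord <;> simp [det2, inner_eq] <;> ring }
  let li : E2 →ₗᵢ[ℝ] E2 :=
    { l with
      norm_map' := fun y => by
        nth_rw 2 [eq_frame hv y]
        rw [norm_frame hv, EuclideanSpace.norm_eq, Fin.sum_univ_two]
        simp [l] }
  have h1 : MeasurePreserving (fun y : E2 => y - o) := measurePreserving_sub_right volume o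
  have h2 := (li.toLinearIsometryEquiv rfl).measurePreserving
  exact (volume_preserving_finTwoArrow ℝ).comp
    ((PiLp.volume_preserving_ofLp (Fin 2)).comp (h2.comp h1))

lemma volume_slicedSet {v : E2} (hv : ‖v‖ = 1) (o : E2) (S : ℝ) {m W : ℝ → ℝ}
    (hm : Continuous m) (hW : Continuous W) :
    volume (slicedSet v o S 0 W) = volume (slicedSet v o S m W) := by
  have hmeas : ∀ f : ℝ → ℝ, Continuous f →
      MeasurableSet {z : ℝ × ℝ | |z.1| ≤ S ∧ |z.2 - f z.1| ≤ W z.1} := by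
    intro f hf
    have h1 : IsClosed {z : ℝ × ℝ | |z.1| ≤ S} := isClosed_le (by fun_prop) (by fun_prop)
    have h2 : IsClosed {z : ℝ × ℝ | |z.2 - f z.1| ≤ W z.1} :=
      isClosed_le (by fun_prop) (by fun_prop)
    exact (h1.inter h2).measurableSet
  have hpre : ∀ f : ℝ → ℝ, Continuous f → volume (slicedSet v o S f W) =
      volume {z : ℝ × ℝ | |z.1| ≤ S ∧ |z.2 - f z.1| ≤ W z.1} := fun f hf =>
    (measurePreserving_det2_inner hv o).measure_preimage (hmeas f hf).nullMeasurableSet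
  have hshear : MeasurePreserving (fun z : ℝ × ℝ => (z.1, z.2 - m z.1)) :=
    (MeasurePreserving.id volume).skew_product (g := fun s t => t - m s)
      (by unfold Function.uncurry; fun_prop)
      (Filter.Eventually.of_forall fun s => (measurePreserving_sub_right volume (m s)).map_eq)
  rw [hpre 0 continuous_zero, hpre m hm,
    ← hshear.measure_preimage (hmeas 0 continuous_zero).nullMeasurableSet]
  simp

/-- The projection of the real line onto `[-k, k]`. -/
def clampTo (k s : ℝ) : ℝ := max (-k) (min k s)

lemma continuous_clampTo (k : ℝ) : Continuous (clampTo k) := by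
  unfold clampTo
  fun_prop

lemma clampTo_cases {k : ℝ} (hk : 0 < k) (s : ℝ) :
    (|s| ≤ k ∧ clampTo k s = s) ∨ (k < s ∧ clampTo k s = k) ∨ (s < -k ∧ clampTo k s = -k) := by
  unfold clampTo
  rcases le_or_gt s k with h1 | h1
  · rcases le_or_gt (-k) s with h2 | h2
    · exact .inl ⟨abs_le.2 ⟨h2, h1⟩, by rw [min_eq_right h1, max_eq_right h2]⟩
    · exact .inr (.inr ⟨h2, by rw [min_eq_right h1, max_eq_left h2.le]⟩)
  · exact .inr (.inl ⟨h1, by rw [min_eq_left h1.le, max_eq_right (by linarith)]⟩)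

/-- The half-length of the slices of a hexagon: constant on `[-k, k]`, then decreasing linearly. -/
def sliceWidth (k h w s : ℝ) : ℝ := w - w / h * |s - clampTo k s|

/-- The midpoint of the slices of a hexagon. -/
def sliceMid (k h μ τ s : ℝ) : ℝ := μ / k * clampTo k s + (τ - μ) / h * (s - clampTo k s)

lemma sliceWidth_nonneg {k h w : ℝ} (hk : 0 < k) (hh : 0 < h) (hw : 0 < w) {s : ℝ}
    (hs : |s| ≤ k + h) : 0 ≤ sliceWidth k h w s := by
  have key : |s - clampTo k s| ≤ h := by
    rw [abs_le] at hs ⊢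
    rcases clampTo_cases hk s with ⟨h1, h2⟩ | ⟨h1, h2⟩ | ⟨h1, h2⟩ <;> rw [h2] <;>
      constructor <;> linarith
  unfold sliceWidth
  have h3 := mul_le_mul_of_nonneg_left key (div_pos hw hh).le
  rw [div_mul_cancel₀ _ hh.ne'] at h3
  linarith

lemma strips_iff_slices {k h w μ τ : ℝ} (hk : 0 < k) (hh : 0 < h) (hw : 0 < w)
    (hl : k * μ + μ * h - k * τ ≤ k * w) (hr : k * τ - k * μ - μ * h ≤ k * w) (s t : ℝ) :
    (|s * (τ - (μ - w)) - t * h| ≤ k * τ - (μ - w) * (k + h) ∧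
      |s * (μ + w - τ) + t * h| ≤ (k + h) * (μ + w) - τ * k ∧
      |s * (2 * μ) - t * (2 * k)| ≤ 2 * k * w) ↔
    |s| ≤ k + h ∧ |t - sliceMid k h μ τ s| ≤ sliceWidth k h w s := by
  unfold sliceMid sliceWidth
  obtain ⟨M, hM⟩ : ∃ M, M = μ / k := ⟨_, rfl⟩
  obtain ⟨T, hT⟩ : ∃ T, T = (τ - μ) / h := ⟨_, rfl⟩
  obtain ⟨g, hg⟩ : ∃ g, g = w / h := ⟨_, rfl⟩
  rw [← hM, ← hT, ← hg]
  obtain rfl : μ = M * k := by rw [hM, div_mul_cancel₀ _ hk.ne']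
  obtain rfl : w = g * h := by rw [hg, div_mul_cancel₀ _ hh.ne']
  obtain rfl : τ = M * k + T * h := by
    rw [hT, div_mul_cancel₀ _ hh.ne']
    ring
  clear hM hT hg
  have hg : 0 < g := pos_of_mul_pos_left hw hh.le
  have hl' : M - T ≤ g := by
    by_contra hc
    nlinarith [mul_pos hk hh]
  have hr' : T - M ≤ g := by
    by_contra hc
    nlinarith [mul_pos hk hh]
  have e1 : |s * (M * k + T * h - (M * k - g * h)) - t * h| ≤
      k * (M * k + T * h) - (M * k - g * h) * (k + h) ↔
      |s * (T + g) - t| ≤ k * T + g * (k + h) - M * k := by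
    rw [show s * (M * k + T * h - (M * k - g * h)) - t * h = (s * (T + g) - t) * h by ring,
      show k * (M * k + T * h) - (M * k - g * h) * (k + h) =
        (k * T + g * (k + h) - M * k) * h by ring, abs_mul, abs_of_pos hh]
    exact mul_le_mul_iff_left₀ hh
  have e2 : |s * (M * k + g * h - (M * k + T * h)) + t * h| ≤
      (k + h) * (M * k + g * h) - (M * k + T * h) * k ↔
      |s * (g - T) + t| ≤ M * k + g * (k + h) - T * k := by
    rw [show s * (M * k + g * h - (M * k + T * h)) + t * h = (s * (g - T) + t) * h by ring,
      show (k + h) * (M * k + g * h) - (M * k + T * h) * k =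
        (M * k + g * (k + h) - T * k) * h by ring, abs_mul, abs_of_pos hh]
    exact mul_le_mul_iff_left₀ hh
  have e3 : |s * (2 * (M * k)) - t * (2 * k)| ≤ 2 * k * (g * h) ↔ |s * M - t| ≤ g * h := by
    rw [show s * (2 * (M * k)) - t * (2 * k) = (s * M - t) * (2 * k) by ring,
      show 2 * k * (g * h) = (g * h) * (2 * k) by ring, abs_mul,
      abs_of_pos (by linarith : 0 < 2 * k)]
    exact mul_le_mul_iff_left₀ (by linarith)
  rw [e1, e2, e3]
  have hS : |s * (T + g) - t| ≤ k * T + g * (k + h) - M * k →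
      |s * (g - T) + t| ≤ M * k + g * (k + h) - T * k → |s| ≤ k + h := by
    rw [abs_le, abs_le, abs_le]
    rintro ⟨a1, a2⟩ ⟨b1, b2⟩
    constructor
    · by_contra hc
      nlinarith
    · by_contra hc
      nlinarith
  rcases clampTo_cases hk s with ⟨h1, h2⟩ | ⟨h1, h2⟩ | ⟨h1, h2⟩ <;> rw [h2]
  · rw [sub_self, abs_zero, mul_zero, mul_zero, sub_zero, add_zero, abs_sub_comm t, mul_comm M s]
    refine ⟨fun ⟨a, b, c⟩ => ⟨hS a b, c⟩, fun ⟨_, c⟩ => ?_⟩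
    rw [abs_le] at h1
    rw [abs_le] at c
    simp only [abs_le]
    refine ⟨⟨?_, ?_⟩, ⟨?_, ?_⟩, c⟩ <;> nlinarith
  · rw [abs_of_pos (sub_pos.2 h1)]
    constructor
    · rintro ⟨a, b, c⟩
      refine ⟨hS a b, ?_⟩
      rw [abs_le] at *
      constructor <;> nlinarith
    · rintro ⟨a, b⟩
      simp only [abs_le] at *
      refine ⟨⟨?_, ?_⟩, ⟨?_, ?_⟩, ?_, ?_⟩ <;> nlinarith
  · rw [abs_of_neg (by linarith : s - -k < 0)]
    constructor
    · rintro ⟨a, b, c⟩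
      refine ⟨hS a b, ?_⟩
      rw [abs_le] at *
      constructor <;> nlinarith
    · rintro ⟨a, b⟩
      simp only [abs_le] at *
      refine ⟨⟨?_, ?_⟩, ⟨?_, ?_⟩, ?_, ?_⟩ <;> nlinarith

lemma centralHull_eq_slicedSet {v : E2} (hv : ‖v‖ = 1) (o : E2) {k h w μ τ : ℝ} (hk : 0 < k)
    (hh : 0 < h) (hw : 0 < w) (hl : k * μ + μ * h - k * τ ≤ k * w)
    (hr : k * τ - k * μ - μ * h ≤ k * w) :
    centralHull o (frame v k (μ - w)) (frame v (k + h) τ) (frame v k (μ + w)) =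
      slicedSet v o (k + h) (sliceMid k h μ τ) (sliceWidth k h w) := by
  have hpos : ConvexPosition (frame v k (μ - w)) (frame v (k + h) τ) (frame v k (μ + w)) := by
    have := mul_pos hk hw
    have := mul_pos hh hw
    constructor <;> simp only [det2_frame hv] <;> nlinarith
  ext y
  rw [mem_centralHull_iff hpos, eq_frame hv (y - o)]
  unfold slicedSet
  rw [mem_ofPred_eq]
  simp only [frame_sub, frame_add, det2_frame hv]
  set s := det2 (y - o) v
  set t := ⟪y - o, v⟫
  rw [← strips_iff_slices hk hh hw hl hr s t]
  ring_nf

lemma centralHull_rotate (o p q r : E2) : centralHull o (-r) p q = centralHull o p q r := by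
  ext y
  constructor
  · rintro ⟨a, b, c, h, rfl⟩
    exact ⟨b, c, -a, by rw [abs_neg]; linarith, by module⟩
  · rintro ⟨a, b, c, h, rfl⟩
    exact ⟨-c, a, b, by rw [abs_neg]; linarith, by module⟩

/-- Symmetrizing a convex hexagon in the direction of the diagonal from `p` to `r`. -/
lemma exists_steiner_centralHull (o : E2) {p q r : E2} (hpos : ConvexPosition p q r) :
    ∃ v p' q' r' : E2, ‖v‖ = 1 ∧ StrictConvexPosition p' q' r' ∧
      steiner v ⟪o, v⟫ (centralHull o p q r) = centralHull o p' q' r' ∧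
      volume (centralHull o p' q' r') = volume (centralHull o p q r) ∧
      ‖p' + r'‖ = ‖r' - q'‖ ∧ ‖q' - p'‖ ≤ ‖p + r‖ ∧ 2 * ‖r' - q'‖ ≤ ‖q - p‖ + ‖r - q‖ := by
  have hrp : r - p ≠ 0 := by
    intro h
    have h1 := hpos.pos
    rw [sub_eq_zero.1 h] at h1
    simp [det2, mul_comm] at h1
  obtain ⟨v, hv, hvr⟩ : ∃ v : E2, ‖v‖ = 1 ∧ r - p = ‖r - p‖ • v :=
    ⟨‖r - p‖⁻¹ • (r - p), norm_smul_inv_norm hrp, by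
      rw [smul_smul, mul_inv_cancel₀ (norm_ne_zero_iff.2 hrp), one_smul]⟩
  obtain ⟨w, hw⟩ : ∃ w, w = ‖r - p‖ / 2 := ⟨_, rfl⟩
  have hw0 : 0 < w := by rw [hw]; exact half_pos (norm_pos_iff.2 hrp)
  have hr : r = p + (2 * w) • v := by
    rw [hw, mul_div_cancel₀ _ two_ne_zero, ← hvr]
    abel
  obtain ⟨k, hk⟩ : ∃ k, k = det2 p v := ⟨_, rfl⟩
  obtain ⟨h, hh⟩ : ∃ h, h = det2 q v - k := ⟨_, rfl⟩
  obtain ⟨μ, hμ⟩ : ∃ μ, μ = ⟪p, v⟫ + w := ⟨_, rfl⟩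
  obtain ⟨τ, hτ⟩ : ∃ τ, τ = ⟪q, v⟫ := ⟨_, rfl⟩
  have hp' : p = frame v k (μ - w) := by
    rw [hk, hμ, add_sub_cancel_right]
    exact eq_frame hv p
  have hq' : q = frame v (k + h) τ := by
    rw [hh, hτ, add_sub_cancel]
    exact eq_frame hv q
  have hr' : r = frame v k (μ + w) := by
    rw [hr, hp']
    apply E2.ext_coord <;> simp [frame] <;> ring
  clear hr hk hh hμ hτ hw hvr hrp
  subst hp' hq' hr'
  obtain ⟨h1, h2, h3, h4⟩ := hpos
  simp only [det2_frame hv] at h1 h2 h3 h4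
  have hk : 0 < k := by
    by_contra hc
    nlinarith
  have hh : 0 < h := by
    by_contra hc
    nlinarith
  have hl : k * μ + μ * h - k * τ ≤ k * w := by nlinarith
  have hr : k * τ - k * μ - μ * h ≤ k * w := by nlinarith
  have hnew : centralHull o (frame v (-k) (-w)) (frame v k (-w)) (frame v (k + h) 0) =
      slicedSet v o (k + h) 0 (sliceWidth k h w) := by
    have h5 := centralHull_eq_slicedSet hv o (μ := 0) (τ := 0) hk hh hw0
      (by nlinarith) (by nlinarith)
    have h6 : sliceMid k h 0 0 = 0 := by
      ext s
      simp [sliceMid]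
    have h7 : frame v (-k) (-w) = - frame v k w := by
      apply E2.ext_coord <;> simp [frame] <;> ring
    rw [h7, centralHull_rotate, ← h6, ← h5, zero_sub, zero_add]
  have hcont : Continuous (sliceMid k h μ τ) := by
    have := continuous_clampTo k
    unfold sliceMid
    fun_prop
  have hcont' : Continuous (sliceWidth k h w) := by
    have := continuous_clampTo k
    unfold sliceWidth
    fun_prop
  refine ⟨v, frame v (-k) (-w), frame v k (-w), frame v (k + h) 0, hv, ?_, ?_, ?_, ?_, ?_, ?_⟩
  · have := mul_pos hk hw0
    have := mul_pos hh hw0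
    constructor <;> simp only [det2_frame hv] <;> nlinarith
  · rw [hnew, centralHull_eq_slicedSet hv o hk hh hw0 hl hr]
    exact steiner_slicedSet hv o fun s hs => sliceWidth_nonneg hk hh hw0 hs
  · rw [hnew, centralHull_eq_slicedSet hv o hk hh hw0 hl hr]
    exact volume_slicedSet hv o (k + h) hcont hcont'
  · simp only [frame_add, frame_sub, norm_frame hv]
    ring_nf
  · simp only [frame_add, frame_sub, norm_frame hv]
    apply Real.sqrt_le_sqrt
    nlinarith [sq_nonneg μ]
  · have h5 : ‖frame v k (μ + w) - frame v (k + h) τ‖ = ‖frame v h (μ + w - τ)‖ := by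
      simp only [frame_sub, norm_frame hv]
      ring_nf
    have h6 : 2 * ‖frame v (k + h) 0 - frame v k (-w)‖ =
        ‖frame v (k + h) τ - frame v k (μ - w) + frame v h (μ + w - τ)‖ := by
      rw [← abs_of_pos (two_pos : (0 : ℝ) < 2), ← Real.norm_eq_abs, ← norm_smul]
      congr 1
      apply E2.ext_coord <;> simp [frame] <;> ring
    rw [h5, h6]
    exact norm_add_le _ _

lemma exists_det2_ne_zero {o p q r : E2} (h : (interior (centralHull o p q r)).Nonempty) :
    det2 p q ≠ 0 ∨ det2 q r ≠ 0 ∨ det2 p r ≠ 0 := by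
  by_contra! hc
  obtain ⟨hpq, hqr, hpr⟩ := hc
  have hself : ∀ z : E2, det2 z z = 0 := fun z => by simp [det2, mul_comm]
  have hanti : ∀ y z : E2, det2 y z = 0 → det2 z y = 0 := fun y z hyz => by
    simp only [det2] at *
    linarith
  obtain ⟨n, hn0, hp, hq, hr⟩ : ∃ n : E2, n ≠ 0 ∧ det2 n p = 0 ∧ det2 n q = 0 ∧ det2 n r = 0 := by
    by_cases h1 : p = 0
    · by_cases h2 : q = 0
      · by_cases h3 : r = 0
        · obtain ⟨n, hn⟩ := exists_ne (0 : E2)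
          exact ⟨n, hn, by simp [h1, det2], by simp [h2, det2], by simp [h3, det2]⟩
        · exact ⟨r, h3, hanti _ _ hpr, hanti _ _ hqr, hself r⟩
      · exact ⟨q, h2, hanti _ _ hpq, hself q, hqr⟩
    · exact ⟨p, h1, hself p, hpq, hpr⟩
  have hzero : ∀ y ∈ centralHull o p q r, det2 n (y - o) = 0 := by
    rintro _ ⟨a, b, c, _, rfl⟩
    have : det2 n (o + (a • p + b • q + c • r) - o) =
        a * det2 n p + b * det2 n q + c * det2 n r := by
      simp [det2]
      ring
    rw [this, hp, hq, hr]
    ring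
  obtain ⟨y, hy⟩ := h
  have hopen : Tendsto (fun ε : ℝ => y + ε • !₂[-(n 1), n 0]) (𝓝 0) (𝓝 y) := by
    have : Continuous fun ε : ℝ => y + ε • (!₂[-(n 1), n 0] : E2) := by fun_prop
    simpa using this.tendsto 0
  have hev := (hopen.eventually (isOpen_interior.mem_nhds hy)).filter_mono
    (nhdsWithin_le_nhds (s := {0}ᶜ))
  obtain ⟨ε, hε, hε0⟩ := (hev.and self_mem_nhdsWithin).exists
  have h1 := hzero _ (interior_subset hε)
  have h2 := hzero _ (interior_subset hy)
  have h3 : ε * (n 0 ^ 2 + n 1 ^ 2) = 0 := by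
    simp [det2] at h1 h2
    linear_combination h1 - h2
  have h4 : n 0 ^ 2 + n 1 ^ 2 = 0 := (mul_eq_zero.1 h3).resolve_left hε0
  exact hn0 (E2.ext_coord (by simp; nlinarith) (by simp; nlinarith))

/-- If `q` lies in the parallelogram spanned by `±p, ±r`, that parallelogram is a hexagon with an
additional vertex at the midpoint of a side. -/
lemma exists_convexPosition_of_parallelogram (o : E2) {p q r : E2} (h0 : det2 p r ≠ 0)
    (h : |det2 p q| + |det2 q r| ≤ |det2 p r|) :
    ∃ p' q' r', ConvexPosition p' q' r' ∧ centralHull o p' q' r' = centralHull o p q r := by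
  obtain ⟨ε, hε, hdet⟩ : ∃ ε : ℝ, |ε| = 1 ∧ 0 < ε * det2 p r := by
    rcases h0.lt_or_gt with h1 | h1
    · exact ⟨-1, by simp, by linarith⟩
    · exact ⟨1, by simp, by linarith⟩
  have hεε : ε * ε = 1 := by rw [← abs_mul_abs_self, hε, one_mul]
  refine ⟨p, ε • r, (1 / 2 : ℝ) • (ε • r - p), ?_, ?_⟩
  · have e1 : det2 p (ε • r) = ε * det2 p r := by simp [det2]; ring
    have e2 : det2 p ((1 / 2 : ℝ) • (ε • r - p)) = ε * det2 p r / 2 := by simp [det2]; ring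
    have e3 : det2 (ε • r) ((1 / 2 : ℝ) • (ε • r - p)) = ε * det2 p r / 2 := by
      simp [det2]; ring
    constructor <;> linarith
  · apply Subset.antisymm <;> apply centralHull_subset
    · exact ⟨1, 0, 0, by simp, by module⟩
    · exact ⟨0, 0, ε, by simp [hε], by module⟩
    · exact ⟨-(1 / 2), 0, ε / 2, by rw [abs_div, hε]; norm_num, by module⟩
    · exact ⟨1, 0, 0, by simp, by module⟩
    · refine ⟨det2 q r / det2 p r, ε * (det2 p q / det2 p r), 0, ?_, ?_⟩
      · rw [abs_mul, hε, one_mul, abs_div, abs_div, abs_zero, add_zero, ← add_div,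
          div_le_one (abs_pos.2 h0)]
        linarith
      · have h1 : q = (det2 p r)⁻¹ • (det2 q r • p + det2 p q • r) := by
          rw [← det2_smul_eq, smul_smul, inv_mul_cancel₀ h0, one_smul]
        have h2 : (ε * (det2 p q / det2 p r)) • ε • r = (det2 p q / det2 p r) • r := by
          rw [smul_smul]
          congr 1
          linear_combination (det2 p q / det2 p r) * hεε
        rw [h2]
        nth_rw 1 [h1]
        simp only [div_eq_mul_inv]
        module
    · exact ⟨0, ε, 0, by simp [hε], by rw [smul_smul, hεε]; module⟩

lemma exists_convexPosition_of_strict_triangle (o : E2) {p q r : E2}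
    (h1 : |det2 p r| < |det2 p q| + |det2 q r|) (h2 : |det2 q r| < |det2 p q| + |det2 p r|)
    (h3 : |det2 p q| < |det2 q r| + |det2 p r|) :
    ∃ p' q' r', ConvexPosition p' q' r' ∧ centralHull o p' q' r' = centralHull o p q r := by
  wlog hz : 0 ≤ det2 p r generalizing r
  · have e1 : det2 p (-r) = - det2 p r := by simp [det2]; ring
    have e2 : det2 q (-r) = - det2 q r := by simp [det2]; ring
    obtain ⟨p', q', r', hpos, heq⟩ := this (r := -r) (by simpa only [e1, e2, abs_neg] using h1)
      (by simpa only [e1, e2, abs_neg] using h2) (by simpa only [e1, e2, abs_neg] using h3)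
      (by rw [e1]; linarith)
    refine ⟨p', q', r', hpos, heq.trans ?_⟩
    apply Subset.antisymm <;> apply centralHull_subset
    · exact ⟨1, 0, 0, by simp, by module⟩
    · exact ⟨0, 1, 0, by simp, by module⟩
    · exact ⟨0, 0, -1, by simp, by module⟩
    · exact ⟨1, 0, 0, by simp, by module⟩
    · exact ⟨0, 1, 0, by simp, by module⟩
    · exact ⟨0, 0, -1, by simp, by module⟩
  wlog hx : 0 ≤ det2 p q generalizing q
  · have e1 : det2 p (-q) = - det2 p q := by simp [det2]; ring
    have e2 : det2 (-q) r = - det2 q r := by simp [det2]; ring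
    obtain ⟨p', q', r', hpos, heq⟩ := this (q := -q) (by simpa only [e1, e2, abs_neg] using h1)
      (by simpa only [e1, e2, abs_neg] using h2) (by simpa only [e1, e2, abs_neg] using h3)
      (by rw [e1]; linarith)
    refine ⟨p', q', r', hpos, heq.trans ?_⟩
    apply Subset.antisymm <;> apply centralHull_subset
    · exact ⟨1, 0, 0, by simp, by module⟩
    · exact ⟨0, -1, 0, by simp, by module⟩
    · exact ⟨0, 0, 1, by simp, by module⟩
    · exact ⟨1, 0, 0, by simp, by module⟩
    · exact ⟨0, -1, 0, by simp, by module⟩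
    · exact ⟨0, 0, 1, by simp, by module⟩
  rw [abs_of_nonneg hx, abs_of_nonneg hz] at *
  rcases le_or_gt 0 (det2 q r) with hy | hy
  · rw [abs_of_nonneg hy] at *
    exact ⟨p, q, r, ⟨by linarith, by linarith, by linarith, by linarith⟩, rfl⟩
  · rw [abs_of_neg hy] at *
    have e1 : det2 r (-p) = det2 p r := by simp [det2]; ring
    have e2 : det2 q (-p) = det2 p q := by simp [det2]; ring
    have e3 : det2 r q = - det2 q r := by simp [det2]; ring
    refine ⟨r, q, -p, ⟨?_, ?_, ?_, ?_⟩, ?_⟩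
    · linarith
    · linarith
    · linarith
    · linarith
    · apply Subset.antisymm <;> apply centralHull_subset
      · exact ⟨0, 0, 1, by simp, by module⟩
      · exact ⟨0, 1, 0, by simp, by module⟩
      · exact ⟨-1, 0, 0, by simp, by module⟩
      · exact ⟨0, 0, -1, by simp, by module⟩
      · exact ⟨0, 1, 0, by simp, by module⟩
      · exact ⟨1, 0, 0, by simp, by module⟩

lemma exists_convexPosition {o p q r : E2} (h : (interior (centralHull o p q r)).Nonempty) :
    ∃ p' q' r', ConvexPosition p' q' r' ∧ centralHull o p' q' r' = centralHull o p q r := by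
  have hne := exists_det2_ne_zero h
  have hanti : ∀ y z : E2, det2 y z = - det2 z y := fun y z => by
    simp only [det2]
    ring
  have key : ∀ x y z : ℝ, |x| + |y| ≤ |z| → (x ≠ 0 ∨ y ≠ 0 ∨ z ≠ 0) → z ≠ 0 := by
    rintro x y z hxyz hor rfl
    rw [abs_zero] at hxyz
    have hx : x = 0 := abs_eq_zero.1 (by linarith [abs_nonneg x, abs_nonneg y])
    have hy : y = 0 := abs_eq_zero.1 (by linarith [abs_nonneg x, abs_nonneg y])
    tauto
  by_cases h1 : |det2 p q| + |det2 q r| ≤ |det2 p r|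
  · exact exists_convexPosition_of_parallelogram o (key _ _ _ h1 hne) h1
  by_cases h2 : |det2 p r| + |det2 q r| ≤ |det2 p q|
  · obtain ⟨p', q', r', hpos, heq⟩ := exists_convexPosition_of_parallelogram o
      (p := p) (q := r) (r := q) (key _ _ _ h2 (by tauto))
      (by rwa [hanti r q, abs_neg])
    refine ⟨p', q', r', hpos, heq.trans ?_⟩
    apply Subset.antisymm <;> apply centralHull_subset
    · exact ⟨1, 0, 0, by simp, by module⟩
    · exact ⟨0, 0, 1, by simp, by module⟩
    · exact ⟨0, 1, 0, by simp, by module⟩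
    · exact ⟨1, 0, 0, by simp, by module⟩
    · exact ⟨0, 0, 1, by simp, by module⟩
    · exact ⟨0, 1, 0, by simp, by module⟩
  by_cases h3 : |det2 p q| + |det2 p r| ≤ |det2 q r|
  · obtain ⟨p', q', r', hpos, heq⟩ := exists_convexPosition_of_parallelogram o
      (p := q) (q := p) (r := r) (key _ _ _ h3 (by tauto))
      (by rwa [hanti q p, abs_neg])
    refine ⟨p', q', r', hpos, heq.trans ?_⟩
    apply Subset.antisymm <;> apply centralHull_subset
    · exact ⟨0, 1, 0, by simp, by module⟩
    · exact ⟨1, 0, 0, by simp, by module⟩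
    · exact ⟨0, 0, 1, by simp, by module⟩
    · exact ⟨0, 1, 0, by simp, by module⟩
    · exact ⟨1, 0, 0, by simp, by module⟩
    · exact ⟨0, 0, 1, by simp, by module⟩
  exact exists_convexPosition_of_strict_triangle o (by linarith) (by linarith) (by linarith)

lemma det2_eq_zero_of_collinear {P Q R : E2} (h : Collinear ℝ ({P, Q, R} : Set E2)) :
    det2 (Q - P) (R - P) = 0 := by
  obtain ⟨n, hn⟩ := (collinear_iff_of_mem (p₀ := P) (by simp)).1 h
  obtain ⟨s, rfl⟩ := hn Q (by simp)
  obtain ⟨t, rfl⟩ := hn R (by simp)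
  simp [det2]
  ring

lemma StrictConvexPosition.nondegenerateHex {p q r : E2} (h : StrictConvexPosition p q r)
    (o : E2) : NondegenerateHex (o + p) (o + q) (o + r) (o - p) (o - q) (o - r) := by
  obtain ⟨h1, h2, h3, h4⟩ := h
  have key : ∀ P Q R : E2, P ∈ ({p, q, r, -p, -q, -r} : Set E2) →
      Q ∈ ({p, q, r, -p, -q, -r} : Set E2) → R ∈ ({p, q, r, -p, -q, -r} : Set E2) →
      P ≠ Q → P ≠ R → Q ≠ R → det2 (Q - P) (R - P) ≠ 0 := by
    simp only [det2] at h1 h2 h3 h4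
    rintro P Q R (rfl | rfl | rfl | rfl | rfl | rfl) (rfl | rfl | rfl | rfl | rfl | rfl)
      (rfl | rfl | rfl | rfl | rfl | rfl) hPQ hPR hQR hdet <;>
    first
    | exact absurd rfl hPQ
    | exact absurd rfl hPR
    | exact absurd rfl hQR
    | simp only [det2, PiLp.sub_apply, PiLp.neg_apply] at hdet
      linarith
  have hmem : ∀ P ∈ ({o + p, o + q, o + r, o - p, o - q, o - r} : Set E2),
      P - o ∈ ({p, q, r, -p, -q, -r} : Set E2) := by
    rintro P (rfl | rfl | rfl | rfl | rfl | rfl) <;> simp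
  refine ⟨?_, ?_⟩
  · simp only [det2] at h1 h2 h3 h4
    have hdet : ∀ w y z : E2, y = z → w 0 * y 1 - w 1 * y 0 = w 0 * z 1 - w 1 * z 0 := by
      rintro w y z rfl
      rfl
    simp only [sub_eq_add_neg, List.pairwise_cons, List.mem_cons, List.not_mem_nil, or_false,
      forall_eq_or_imp, forall_eq, ne_eq, add_right_inj, IsEmpty.forall_iff, implies_true,
      List.Pairwise.nil, and_true]
    refine ⟨⟨?_, ?_, ?_, ?_, ?_⟩, ⟨?_, ?_, ?_, ?_⟩, ⟨?_, ?_, ?_⟩, ⟨?_, ?_⟩, ?_⟩ <;>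
    intro heq <;>
    · have hp := hdet p _ _ heq
      have hq := hdet q _ _ heq
      have hr := hdet r _ _ heq
      simp only [PiLp.neg_apply] at hp hq hr
      linarith
  · intro P Q R hP hQ hR hPQ hPR hQR hcol
    refine key (P - o) (Q - o) (R - o) (hmem P hP) (hmem Q hQ) (hmem R hR) ?_ ?_ ?_ ?_
    · simpa using hPQ
    · simpa using hPR
    · simpa using hQR
    · rw [sub_sub_sub_cancel_right, sub_sub_sub_cancel_right]
      exact det2_eq_zero_of_collinear hcol

lemma StrictConvexPosition.ccwList {p q r : E2} (h : StrictConvexPosition p q r)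
    (o : E2) : CCWList (o + p) (o + q) (o + r) (o - p) (o - q) (o - r) := by
  obtain ⟨h1, h2, h3, h4⟩ := h
  simp only [det2] at h1 h2 h3 h4
  refine ⟨?_, ?_, ?_, ?_, ?_, ?_⟩ <;>
    simp only [det2, PiLp.sub_apply, PiLp.add_apply] <;> linarith

lemma StrictConvexPosition.hexWithVertices {p q r : E2} (h : StrictConvexPosition p q r)
    (o : E2) : HexWithVertices (o + p) (o + q) (o + r) (o - p) (o - q) (o - r)
      (centralHull o p q r) :=
  ⟨(convexHull_eq_centralHull o p q r).symm, ⟨o, by module, by module, by module⟩,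
    interior_centralHull_nonempty h⟩

/-- Iterated Steiner symmetrizations of any `H₀ ∈ 𝓗` produce a sequence
of nondegenerate centrally symmetric hexagons of constant area, having two opposite sides
of length `b n` and four sides of length `a n`, with `4a_{n+1} + 2b_{n+1} ≤ 4a_n + 2b_n`,
`2a_{n+1} ≤ a_n + b_n` and `b_{n+1} ≤ a_n`. -/
theorem statement4 (H₀ : Set E2) (hH₀ : Hex H₀) :
    ∃ (v : ℕ → E2) (c : ℕ → ℝ) (H : ℕ → Set E2) (a b : ℕ → ℝ),
      (∀ n, ‖v n‖ = 1) ∧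
      H 0 = H₀ ∧
      (∀ n, H (n + 1) = steiner (v n) (c n) (H n)) ∧
      (∀ n, 1 ≤ n → volume (H n) = volume H₀) ∧
      (∀ n, 1 ≤ n → 0 < a n ∧ 0 < b n ∧
        ∃ A B C D E F : E2,
          HexWithVertices A B C D E F (H n) ∧ CCWList A B C D E F ∧
          NondegenerateHex A B C D E F ∧
          dist A B = b n ∧ dist D E = b n ∧
          dist B C = a n ∧ dist C D = a n ∧ dist E F = a n ∧ dist F A = a n) ∧
      (∀ n, 1 ≤ n →
        4 * a (n + 1) + 2 * b (n + 1) ≤ 4 * a n + 2 * b n ∧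
        2 * a (n + 1) ≤ a n + b n ∧
        b (n + 1) ≤ a n) := by
  obtain ⟨⟨o, p₀, q₀, r₀, rfl⟩, hint⟩ := hH₀
  rw [image_convexHull_eq_centralHull] at hint ⊢
  obtain ⟨p₁, q₁, r₁, hpos, heq⟩ := exists_convexPosition hint
  rw [← heq]
  choose V P Q R hV hstrict hst hvol hsym hb ha using
    fun T : {T : E2 × E2 × E2 // ConvexPosition T.1 T.2.1 T.2.2} =>
      exists_steiner_centralHull o T.2
  let T : ℕ → {T : E2 × E2 × E2 // ConvexPosition T.1 T.2.1 T.2.2} := fun n =>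
    Nat.rec ⟨(p₁, q₁, r₁), hpos⟩
      (fun _ T => ⟨(P T, Q T, R T), (hstrict T).convexPosition⟩) n
  let p : ℕ → E2 := fun n => (T n).1.1
  let q : ℕ → E2 := fun n => (T n).1.2.1
  let r : ℕ → E2 := fun n => (T n).1.2.2
  have hpos' : ∀ n, 1 ≤ n → StrictConvexPosition (p n) (q n) (r n) ∧
      ‖p n + r n‖ = ‖r n - q n‖ := by
    intro n hn
    obtain ⟨m, rfl⟩ := Nat.exists_eq_add_of_le' hn
    exact ⟨hstrict (T m), hsym (T m)⟩
  refine ⟨fun n => V (T n), fun n => ⟪o, V (T n)⟫, fun n => centralHull o (p n) (q n) (r n),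
    fun n => ‖r n - q n‖, fun n => ‖q n - p n‖, fun n => hV _, rfl, fun n => (hst (T n)).symm,
    ?_, ?_, ?_⟩
  · intro n _
    induction n with
    | zero => rfl
    | succ n ih =>
      rcases Nat.eq_zero_or_pos n with rfl | hn
      · exact hvol (T 0)
      · exact (hvol (T n)).trans (ih hn)
  · intro n hn
    obtain ⟨h, hs⟩ := hpos' n hn
    have hnd := h.nondegenerateHex o
    have hne := hnd.1
    simp only [List.pairwise_cons, List.mem_cons, forall_eq_or_imp, ne_eq, add_right_inj] at hne
    refine ⟨norm_pos_iff.2 (sub_ne_zero.2 (Ne.symm hne.2.1.1)),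
      norm_pos_iff.2 (sub_ne_zero.2 (Ne.symm hne.1.1)), o + p n, o + q n, o + r n, o - p n,
      o - q n, o - r n, h.hexWithVertices o, h.ccwList o, hnd, ?_, ?_, ?_, ?_, ?_, ?_⟩
    · rw [dist_add_left, dist_eq_norm, norm_sub_rev]
    · rw [dist_sub_left, dist_eq_norm, norm_sub_rev]
    · rw [dist_add_left, dist_eq_norm, norm_sub_rev]
    · rw [dist_eq_norm]
      refine Eq.trans ?_ hs
      congr 1
      abel
    · rw [dist_sub_left, dist_eq_norm, norm_sub_rev]
    · rw [dist_comm, dist_eq_norm]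
      refine Eq.trans ?_ hs
      congr 1
      abel
  · intro n hn
    have h1 : ‖q (n + 1) - p (n + 1)‖ ≤ ‖r n - q n‖ := (hb (T n)).trans_eq (hpos' n hn).2
    have h2 : 2 * ‖r (n + 1) - q (n + 1)‖ ≤ ‖q n - p n‖ + ‖r n - q n‖ := ha (T n)
    exact ⟨by linarith, by linarith, h1⟩
end
end

section
/- Let (a_n)_{n≥1} and (b_n)_{n≥1} be sequences of positive real numbers satisfying 2a_{n+1} ≤ a_n + b_n and b_{n+1} ≤ a_n for every n ≥ 1, and set c = inf_{n≥1} max(a_n, b_n). Then both sequences converge and lim_n a_n = lim_n b_n = c; equivalently, lim_n min(a_n, b_n) = lim_n max(a_n, b_n) = c. -/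
open Filter
open scoped Topology

/-- If `a_n, b_n > 0` satisfy `2a_{n+1} ≤ a_n + b_n` and `b_{n+1} ≤ a_n`
for every `n ≥ 1`, and `c = inf_{n ≥ 1} max (a_n, b_n)`, then
`lim a_n = lim b_n = lim min (a_n, b_n) = lim max (a_n, b_n) = c`. -/
theorem statement6 (a b : ℕ → ℝ)
    (ha : ∀ n, 1 ≤ n → 0 < a n) (hb : ∀ n, 1 ≤ n → 0 < b n)
    (h1 : ∀ n, 1 ≤ n → 2 * a (n + 1) ≤ a n + b n)
    (h2 : ∀ n, 1 ≤ n → b (n + 1) ≤ a n)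
    (c : ℝ) (hc : c = ⨅ n : ℕ, max (a (n + 1)) (b (n + 1))) :
    Tendsto a atTop (𝓝 c) ∧ Tendsto b atTop (𝓝 c) ∧
    Tendsto (fun n => min (a n) (b n)) atTop (𝓝 c) ∧
    Tendsto (fun n => max (a n) (b n)) atTop (𝓝 c) := by
  have hanti : Antitone fun n => max (a (n + 1)) (b (n + 1)) := by
    refine antitone_nat_of_succ_le fun n => max_le ?_ ?_
    · linarith [h1 (n + 1) (by omega), le_max_left (a (n + 1)) (b (n + 1)),
        le_max_right (a (n + 1)) (b (n + 1))]
    · exact (h2 (n + 1) (by omega)).trans (le_max_left _ _)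
  have hbdd : BddBelow (Set.range fun n => max (a (n + 1)) (b (n + 1))) := by
    refine ⟨0, ?_⟩
    rintro _ ⟨n, rfl⟩
    exact (ha (n + 1) (by omega)).le.trans (le_max_left _ _)
  have hmax : Tendsto (fun n => max (a (n + 1)) (b (n + 1))) atTop (𝓝 c) :=
    hc ▸ tendsto_atTop_ciInf hanti hbdd
  have hle : ∀ n, c ≤ max (a (n + 1)) (b (n + 1)) := fun n => hc ▸ ciInf_le hbdd n
  have hlower_a : ∀ n, 2 * c - max (a (n + 1)) (b (n + 1)) ≤ a (n + 1) := by
    intro n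
    have hstep : max (a (n + 1 + 1)) (b (n + 1 + 1)) ≤
        (a (n + 1) + max (a (n + 1)) (b (n + 1))) / 2 := by
      refine max_le ?_ ?_
      · linarith [h1 (n + 1) (by omega), le_max_right (a (n + 1)) (b (n + 1))]
      · linarith [h2 (n + 1) (by omega), le_max_left (a (n + 1)) (b (n + 1))]
    linarith [hle (n + 1)]
  have ha_shift : Tendsto (fun n => a (n + 1)) atTop (𝓝 c) := by
    have hlim := hmax.const_sub (2 * c)
    rw [show 2 * c - c = c by ring] at hlim
    exact tendsto_of_tendsto_of_tendsto_of_le_of_le hlim hmax hlower_a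
      fun n => le_max_left _ _
  have hb_shift : Tendsto (fun n => b (n + 1)) atTop (𝓝 c) := by
    have hlim := (((tendsto_add_atTop_iff_nat 1).2 ha_shift).const_mul 2).sub ha_shift
    rw [show 2 * c - c = c by ring] at hlim
    refine tendsto_of_tendsto_of_tendsto_of_le_of_le hlim hmax (fun n => ?_)
      fun n => le_max_right _ _
    linarith [h1 (n + 1) (by omega)]
  have ha_lim : Tendsto a atTop (𝓝 c) := (tendsto_add_atTop_iff_nat 1).1 ha_shift
  have hb_lim : Tendsto b atTop (𝓝 c) := (tendsto_add_atTop_iff_nat 1).1 hb_shift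
  exact ⟨ha_lim, hb_lim, by simpa using ha_lim.min hb_lim, by simpa using ha_lim.max hb_lim⟩
end

section
/- Let (a_n)_{n≥1} and (b_n)_{n≥1} be sequences of positive real numbers satisfying 2a_{n+1} ≤ a_n + b_n and b_{n+1} ≤ a_n for every n ≥ 1. Set c_n = max(a_n, b_n), d_n = min(a_n, b_n) and c = inf_{n≥1} c_n. Let ε > 0 and let n ≥ 1 be such that c_k ≤ c + ε for all k ≥ n. Then max(d_n, d_{n+1}) ≥ c − ε. -/
/-- If `a_n, b_n > 0` satisfy `2a_{n+1} ≤ a_n + b_n` and `b_{n+1} ≤ a_n`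
for every `n ≥ 1`, `c = inf_{n ≥ 1} max (a_n, b_n)`, `ε > 0`, and `n ≥ 1` is such that
`max (a_k, b_k) ≤ c + ε` for all `k ≥ n`, then `max (d_n, d_{n+1}) ≥ c − ε`, where
`d_k = min (a_k, b_k)`. -/
theorem statement7 (a b : ℕ → ℝ)
    (ha : ∀ n, 1 ≤ n → 0 < a n) (hb : ∀ n, 1 ≤ n → 0 < b n)
    (h1 : ∀ n, 1 ≤ n → 2 * a (n + 1) ≤ a n + b n)
    (h2 : ∀ n, 1 ≤ n → b (n + 1) ≤ a n)
    (c : ℝ) (hc : c = ⨅ n : ℕ, max (a (n + 1)) (b (n + 1)))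
    (ε : ℝ) (hε : 0 < ε)
    (n : ℕ) (hn : 1 ≤ n)
    (hcn : ∀ k, n ≤ k → max (a k) (b k) ≤ c + ε) :
    c - ε ≤ max (min (a n) (b n)) (min (a (n + 1)) (b (n + 1))) := by
  have lower : ∀ k, 1 ≤ k → c ≤ max (a k) (b k) := by
    intro k hk
    obtain ⟨m, rfl⟩ := Nat.exists_eq_add_of_le' hk
    rw [hc]
    refine ciInf_le ⟨0, ?_⟩ m
    rintro _ ⟨j, rfl⟩
    exact le_max_of_le_left (ha (j + 1) (by omega)).le
  by_contra! h
  obtain ⟨hd, hd'⟩ := max_lt_iff.mp h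
  have hsum := min_add_max (a n) (b n)
  have hsum' := min_add_max (a (n + 1)) (b (n + 1))
  have ha₁ : a (n + 1) < c := by linarith [h1 n hn, hcn n le_rfl]
  have hb₁ : c ≤ b (n + 1) :=
    (le_max_iff.mp (lower (n + 1) (by omega))).resolve_left ha₁.not_ge
  have hmin : a (n + 1) < c - ε := by
    rwa [min_eq_left (ha₁.le.trans hb₁)] at hd'
  have ha₂ : a (n + 2) < c := by
    linarith [h1 (n + 1) (by omega), hcn (n + 1) (by omega)]
  have hb₂ : b (n + 2) < c := by linarith [h2 (n + 1) (by omega)]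
  exact (max_lt ha₂ hb₂).not_ge (lower (n + 2) (by omega))
end

section
/- Let s > 0 and let H ⊆ ℝ² be a centrally symmetric convex hexagon with six distinct vertices, all six of whose sides have length s, and whose Lebesgue area equals (3√3/2)·s². Then H is a regular hexagon (with side length s). -/
open MeasureTheory Metric Filter Real Set
open scoped Topology ENNReal NNReal RealInnerProductSpace

noncomputable section

/-- The parallelogram with corner `x` spanned by `u` and `v`. -/
def parallelogram (x u v : E2) : Set E2 :=
  {y : E2 | ∃ a ∈ Icc (0 : ℝ) 1, ∃ b ∈ Icc (0 : ℝ) 1, y = x + a • u + b • v}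

theorem volume_parallelogram_le (x u v : E2) :
    volume (parallelogram x u v) ≤ ENNReal.ofReal |det2 u v| := by
  set f : (Fin 2 → ℝ) →ₗ[ℝ] (Fin 2 → ℝ) := Matrix.toLin' !![u 0, v 0; u 1, v 1] with hf
  have hdet : LinearMap.det f = det2 u v := by
    rw [hf, LinearMap.det_toLin', Matrix.det_fin_two_of, det2]
    ring
  set g := (MeasurableEquiv.toLp 2 (Fin 2 → ℝ)).symm
  have hg : ∀ y, g y = y.ofLp := fun _ => rfl
  have hsub : parallelogram x u v ⊆
      g ⁻¹' ((fun z => -(g x) + z) ⁻¹' (f '' Icc (0 : Fin 2 → ℝ) 1)) := by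
    rintro y ⟨a, ha, b, hb, rfl⟩
    refine ⟨![a, b], ⟨?_, ?_⟩, ?_⟩
    · intro i
      fin_cases i <;> simp [ha.1, hb.1]
    · intro i
      fin_cases i <;> simp [ha.2, hb.2]
    · ext i
      fin_cases i <;>
        simp [f, hg, Matrix.mulVec, dotProduct, Fin.sum_univ_two] <;> ring
  calc volume (parallelogram x u v)
      ≤ volume (g ⁻¹' ((fun z => -(g x) + z) ⁻¹' (f '' Icc (0 : Fin 2 → ℝ) 1))) :=
        measure_mono hsub
    _ = volume (f '' Icc (0 : Fin 2 → ℝ) 1) := by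
        rw [(EuclideanSpace.volume_preserving_symm_measurableEquiv_toLp
          (Fin 2)).measure_preimage_equiv, measure_preimage_add]
    _ = ENNReal.ofReal |det2 u v| := by
        rw [Measure.addHaar_image_linearMap, hdet, Real.volume_Icc_pi]
        simp

/-- Starting in the nonnegative octant and moving along a direction whose coordinates have negative
sum, one reaches a wall. -/
theorem exists_first_hit {x y z α β γ : ℝ} (hx : 0 ≤ x) (hy : 0 ≤ y) (hz : 0 ≤ z)
    (hpos : 0 < α + β + γ) :
    ∃ t : ℝ, 0 ≤ t ∧ t * α ≤ x ∧ t * β ≤ y ∧ t * γ ≤ z ∧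
      (t * α = x ∨ t * β = y ∨ t * γ = z) := by
  set g : ℝ → ℝ := fun t => min (x - t * α) (min (y - t * β) (z - t * γ)) with hg
  have hcont : Continuous g := by fun_prop
  set T := (x + y + z) / (α + β + γ) with hT
  have hT0 : 0 ≤ T := by positivity
  have hTeq : T * (α + β + γ) = x + y + z := by rw [hT]; field_simp
  have hgT : g T ≤ 0 := by
    by_contra! h
    simp only [hg, lt_min_iff] at h
    nlinarith [h.1, h.2.1, h.2.2]
  have hg0 : 0 ≤ g 0 := by simp [hg, hx, hy, hz]
  obtain ⟨t, ht, hgt⟩ := intermediate_value_Icc' hT0 hcont.continuousOn ⟨hgT, hg0⟩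
  have hle := hgt.ge
  simp only [hg, le_min_iff] at hle
  refine ⟨t, ht.1, by linarith, by linarith, by linarith, ?_⟩
  by_contra! hne
  have : 0 < g t := by
    simp only [hg, lt_min_iff]
    refine ⟨lt_of_le_of_ne hle.1 ?_, lt_of_le_of_ne hle.2.1 ?_, lt_of_le_of_ne hle.2.2 ?_⟩
    · exact fun h => hne.1 (by linarith)
    · exact fun h => hne.2.1 (by linarith)
    · exact fun h => hne.2.2 (by linarith)
  exact this.ne' hgt

/-- The zonogon with corner `x` and generators `u`, `v`, `w`. -/
def zonogon (x u v w : E2) : Set E2 :=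
  {y : E2 | ∃ a ∈ Icc (0 : ℝ) 1, ∃ b ∈ Icc (0 : ℝ) 1, ∃ c ∈ Icc (0 : ℝ) 1,
    y = x + a • u + b • v + c • w}

theorem convex_zonogon (x u v w : E2) : Convex ℝ (zonogon x u v w) := by
  rintro _ ⟨a, ha, b, hb, c, hc, rfl⟩ _ ⟨a', ha', b', hb', c', hc', rfl⟩ p q hp hq hpq
  refine ⟨_, convex_Icc _ _ ha ha' hp hq hpq, _, convex_Icc _ _ hb hb' hp hq hpq,
    _, convex_Icc _ _ hc hc' hp hq hpq, ?_⟩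
  obtain rfl : q = 1 - p := by linarith
  simp only [smul_eq_mul]
  module

theorem zonogon_subset_parallelograms {x u v w : E2} {α β γ : ℝ} (hα : 0 ≤ α) (hβ : 0 ≤ β)
    (hγ : 0 ≤ γ) (hpos : 0 < α + β + γ) (hrel : α • u + γ • w = β • v) :
    zonogon x u v w ⊆
      parallelogram (x + u) v w ∪ (parallelogram x u w ∪ parallelogram (x + w) u v) := by
  rintro _ ⟨a, ha, b, hb, c, hc, rfl⟩
  obtain ⟨t, ht, h1, h2, h3, h⟩ := exists_first_hit (sub_nonneg.2 ha.2) hb.1 (sub_nonneg.2 hc.2)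
    hpos
  have htα := mul_nonneg ht hα
  have htβ := mul_nonneg ht hβ
  have htγ := mul_nonneg ht hγ
  have ha' : a + t * α ∈ Icc (0 : ℝ) 1 := ⟨by linarith [ha.1], by linarith⟩
  have hb' : b - t * β ∈ Icc (0 : ℝ) 1 := ⟨by linarith, by linarith [hb.2]⟩
  have hc' : c + t * γ ∈ Icc (0 : ℝ) 1 := ⟨by linarith [hc.1], by linarith⟩
  have hmove : x + a • u + b • v + c • w =
      x + (a + t * α) • u + (b - t * β) • v + (c + t * γ) • w := by
    linear_combination (norm := module) (-t) • hrel
  rw [hmove]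
  rcases h with h | h | h
  · refine Or.inl ⟨_, hb', _, hc', ?_⟩
    rw [h]
    module
  · refine Or.inr (Or.inl ⟨_, ha', _, hc', ?_⟩)
    rw [h]
    module
  · refine Or.inr (Or.inr ⟨_, ha', _, hb', ?_⟩)
    rw [h]
    module

theorem volume_zonogon_le {x u v w : E2} {α β γ : ℝ} (hα : 0 ≤ α) (hβ : 0 ≤ β)
    (hγ : 0 ≤ γ) (hpos : 0 < α + β + γ) (hrel : α • u + γ • w = β • v)
    (huv : 0 ≤ det2 u v) (hvw : 0 ≤ det2 v w) (huw : 0 ≤ det2 u w) :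
    volume (zonogon x u v w) ≤ ENNReal.ofReal (det2 u v + det2 v w + det2 u w) := by
  have hsum : det2 u v + det2 v w + det2 u w = |det2 v w| + (|det2 u w| + |det2 u v|) := by
    rw [abs_of_nonneg huv, abs_of_nonneg hvw, abs_of_nonneg huw]
    ring
  rw [hsum, ENNReal.ofReal_add (abs_nonneg _) (by positivity),
    ENNReal.ofReal_add (abs_nonneg _) (abs_nonneg _)]
  refine (measure_mono (zonogon_subset_parallelograms hα hβ hγ hpos hrel)).trans ?_
  refine (measure_union_le _ _).trans (add_le_add (volume_parallelogram_le _ _ _) ?_)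
  exact (measure_union_le _ _).trans
    (add_le_add (volume_parallelogram_le _ _ _) (volume_parallelogram_le _ _ _))

theorem dist_sq_eq (x y : E2) : dist x y ^ 2 = (y - x) 0 ^ 2 + (y - x) 1 ^ 2 := by
  rw [dist_comm, EuclideanSpace.dist_eq, Real.sq_sqrt (by positivity), Fin.sum_univ_two]
  simp [Real.dist_eq, sq_abs]

/-- Parallel vectors of the same length that are not opposite are equal. -/
theorem eq_of_det2_eq_zero {u v : E2} (h : det2 u v = 0)
    (hnorm : u 0 ^ 2 + u 1 ^ 2 = v 0 ^ 2 + v 1 ^ 2) (hne : u + v ≠ 0) : u = v := by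
  simp only [det2] at h
  have hpar : ∀ i, (u - v) i = 0 := by
    by_contra! hcon
    refine hne ?_
    have hsum : (u 0 + v 0) ^ 2 + (u 1 + v 1) ^ 2 = 0 ∨
        (u 0 - v 0) ^ 2 + (u 1 - v 1) ^ 2 = 0 := by
      rw [← mul_eq_zero]
      linear_combination (u 0 ^ 2 + u 1 ^ 2 - v 0 ^ 2 - v 1 ^ 2) * hnorm +
        4 * (u 0 * v 1 - u 1 * v 0) * h
    rcases hsum with hz | hz
    · ext i
      fin_cases i <;> simp <;> nlinarith
    · obtain ⟨i, hi⟩ := hcon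
      refine absurd ?_ hi
      fin_cases i <;> simp <;> nlinarith
  ext i
  simpa [sub_eq_zero] using hpar i

/-- The equality case of the isoperimetric inequality for equilateral centrally symmetric
hexagons, in terms of the side vectors. -/
theorem eq_rotate_of_le_sum_det2 {s : ℝ} {u v w : E2}
    (hu : u 0 ^ 2 + u 1 ^ 2 = s ^ 2) (hv : v 0 ^ 2 + v 1 ^ 2 = s ^ 2)
    (hw : w 0 ^ 2 + w 1 ^ 2 = s ^ 2)
    (h : 3 * √3 / 2 * s ^ 2 ≤ det2 u v + det2 v w + det2 u w) :
    v = u + w ∧ w 0 = -u 0 / 2 - √3 / 2 * u 1 ∧ w 1 = -u 1 / 2 + √3 / 2 * u 0 := by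
  have h3 : √3 ^ 2 = 3 := Real.sq_sqrt (by norm_num)
  have hpos : 0 < √3 := by positivity
  simp only [det2] at h
  set r := √3
  obtain ⟨p, hp⟩ : ∃ p, p = u 0 - v 0 + w 0 := ⟨_, rfl⟩
  obtain ⟨q, hq⟩ : ∃ q, q = u 1 - v 1 + w 1 := ⟨_, rfl⟩
  obtain ⟨k, hk⟩ : ∃ k, k = u 0 - w 0 / 2 - r / 2 * w 1 + v 0 / 2 - r / 2 * v 1 := ⟨_, rfl⟩
  obtain ⟨l, hl⟩ : ∃ l, l = u 1 + r / 2 * w 0 - w 1 / 2 + r / 2 * v 0 + v 1 / 2 := ⟨_, rfl⟩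
  have hsum : r * (p ^ 2 + q ^ 2 + 2 * (k ^ 2 + l ^ 2)) ≤ 0 := by
    have hid : r * (p ^ 2 + q ^ 2 + 2 * (k ^ 2 + l ^ 2)) = 6 * (3 * r / 2 * s ^ 2 -
        (u 0 * v 1 - u 1 * v 0 + (v 0 * w 1 - v 1 * w 0) + (u 0 * w 1 - u 1 * w 0))) := by
      rw [hp, hq, hk, hl]
      linear_combination 3 * r * hu + 3 * r * hv + 3 * r * hw +
        (r / 2 * ((v 0 + w 0) ^ 2 + (v 1 + w 1) ^ 2) - 2 * (u 0 * v 1 - u 1 * v 0 +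
          (v 0 * w 1 - v 1 * w 0) + (u 0 * w 1 - u 1 * w 0))) * h3
    linarith
  have hsq : p ^ 2 + q ^ 2 + 2 * (k ^ 2 + l ^ 2) ≤ 0 := nonpos_of_mul_nonpos_right hsum hpos
  have hp0 : p = 0 := sq_eq_zero_iff.1 (le_antisymm
    (by linarith [sq_nonneg q, sq_nonneg k, sq_nonneg l]) (sq_nonneg _))
  have hq0 : q = 0 := sq_eq_zero_iff.1 (le_antisymm
    (by linarith [sq_nonneg p, sq_nonneg k, sq_nonneg l]) (sq_nonneg _))
  have hk0 : k = 0 := sq_eq_zero_iff.1 (le_antisymm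
    (by linarith [sq_nonneg p, sq_nonneg q, sq_nonneg l]) (sq_nonneg _))
  have hl0 : l = 0 := sq_eq_zero_iff.1 (le_antisymm
    (by linarith [sq_nonneg p, sq_nonneg q, sq_nonneg k]) (sq_nonneg _))
  rw [hp] at hp0
  rw [hq] at hq0
  rw [hk] at hk0
  rw [hl] at hl0
  refine ⟨?_, ?_, ?_⟩
  · ext i
    fin_cases i <;> simp <;> linarith
  · linear_combination r / 3 * hl0 + r / 6 * hq0 + hp0 / 2 - (w 0 + v 0) / 6 * h3
  · linear_combination -r / 3 * hk0 - r / 6 * hp0 + hq0 / 2 - (w 1 + v 1) / 6 * h3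

/-- The similarity sending `0` to `o` and the first basis vector to `o + u`. -/
def rotateScale (o u : E2) : E2 →ᵃ[ℝ] E2 where
  toFun x := o + (x 0 • u + x 1 • !₂[-u 1, u 0])
  linear :=
    { toFun := fun x => x 0 • u + x 1 • !₂[-u 1, u 0]
      map_add' := fun x y => by simp; module
      map_smul' := fun c x => by simp; module }
  map_vadd' := fun x y => by simp; module

theorem isSimilarity_rotateScale {s : ℝ} (hs : 0 < s) (o : E2) {u : E2}
    (hu : u 0 ^ 2 + u 1 ^ 2 = s ^ 2) : IsSimilarity (rotateScale o u) := by
  refine ⟨s, hs, fun x y => ?_⟩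
  rw [← sq_eq_sq₀ dist_nonneg (by positivity), mul_pow, dist_sq_eq, dist_sq_eq, ← hu]
  simp [rotateScale]
  ring

theorem range_hexVertex : (Set.range fun k : Fin 6 => hexVertex k) =
    {!₂[1, 0], !₂[1 / 2, √3 / 2], !₂[-1 / 2, √3 / 2], !₂[-1, 0], !₂[-1 / 2, -√3 / 2],
      !₂[1 / 2, -√3 / 2]} := by
  have h2 : 2 * π / 3 = π - π / 3 := by ring
  have h4 : 4 * π / 3 = π / 3 + π := by ring
  have h5 : 5 * π / 3 = 2 * π - π / 3 := by ring
  have e0 : hexVertex (0 : Fin 6) = !₂[1, 0] := by simp [hexVertex]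
  have e1 : hexVertex (1 : Fin 6) = !₂[1 / 2, √3 / 2] := by simp [hexVertex]
  have e2 : hexVertex (2 : Fin 6) = !₂[-1 / 2, √3 / 2] := by
    simp [hexVertex, h2, neg_div]
  have e3 : hexVertex (3 : Fin 6) = !₂[-1, 0] := by simp [hexVertex]
  have e4 : hexVertex (4 : Fin 6) = !₂[-1 / 2, -√3 / 2] := by
    simp [hexVertex, h4, Real.cos_add_pi, Real.sin_add_pi, neg_div]
  have e5 : hexVertex (5 : Fin 6) = !₂[1 / 2, -√3 / 2] := by
    simp [hexVertex, h5, Real.cos_two_pi_sub, Real.sin_two_pi_sub, neg_div]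
  rw [← e0, ← e1, ← e2, ← e3, ← e4, ← e5]
  ext x
  simp [Fin.exists_fin_succ, eq_comm]

/-- The case of counterclockwise vertices. -/
theorem isRegularHexagon_of_ccwList {s : ℝ} (hs : 0 < s) {H : Set E2} {A B C D E F : E2}
    (hvert : HexWithVertices A B C D E F H) (horder : CCWList A B C D E F) (hAC : A ≠ C)
    (hAB : dist A B = s) (hBC : dist B C = s) (hCD : dist C D = s)
    (harea : volume H = ENNReal.ofReal (3 * √3 / 2 * s ^ 2)) :
    IsRegularHexagon H := by
  obtain ⟨hH, ⟨o, hD, hE, hF⟩, -⟩ := hvert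
  obtain ⟨u, rfl⟩ : ∃ u, B = A + u := ⟨B - A, by simp⟩
  obtain ⟨v, rfl⟩ : ∃ v, C = A + u + v := ⟨C - (A + u), by simp⟩
  obtain ⟨w, rfl⟩ : ∃ w, D = A + u + v + w := ⟨D - (A + u + v), by simp⟩
  have ho : (2 : ℝ) • o = A + u + v + w + A := by rw [hD]; simp
  obtain rfl : E = A + v + w := by rw [hE, ho]; abel
  obtain rfl : F = A + w := by rw [hF, ho]; abel
  have hu : u 0 ^ 2 + u 1 ^ 2 = s ^ 2 := by rw [← hAB, dist_sq_eq]; simp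
  have hv : v 0 ^ 2 + v 1 ^ 2 = s ^ 2 := by rw [← hBC, dist_sq_eq]; simp
  have hw : w 0 ^ 2 + w 1 ^ 2 = s ^ 2 := by rw [← hCD, dist_sq_eq]; simp
  obtain ⟨huv, hvw, huw, -⟩ := horder
  replace huv : 0 ≤ det2 u v := by simpa using huv
  replace hvw : 0 ≤ det2 v w := by simpa using hvw
  replace huw : 0 ≤ det2 u w := by
    simp only [det2, PiLp.sub_apply, PiLp.add_apply] at huw ⊢
    linarith
  have hsub : H ⊆ zonogon A u v w := by
    rw [hH]
    refine convexHull_min ?_ (convex_zonogon A u v w)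
    have h0 : (0 : ℝ) ∈ Icc (0 : ℝ) 1 := by simp
    have h1 : (1 : ℝ) ∈ Icc (0 : ℝ) 1 := by simp
    rintro y (rfl | rfl | rfl | rfl | rfl | rfl)
    · exact ⟨0, h0, 0, h0, 0, h0, by module⟩
    · exact ⟨1, h1, 0, h0, 0, h0, by module⟩
    · exact ⟨1, h1, 1, h1, 0, h0, by module⟩
    · exact ⟨1, h1, 1, h1, 1, h1, by module⟩
    · exact ⟨0, h0, 1, h1, 1, h1, by module⟩
    · exact ⟨0, h0, 0, h0, 1, h1, by module⟩
  have hvol : volume (zonogon A u v w) ≤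
      ENNReal.ofReal (det2 u v + det2 v w + det2 u w) := by
    rcases (add_nonneg (add_nonneg hvw huw) huv).lt_or_eq with hpos | hzero
    · refine volume_zonogon_le hvw huw huv hpos ?_ huv hvw huw
      ext i
      fin_cases i <;> simp [det2] <;> ring
    · have hu_eq : u = v := eq_of_det2_eq_zero (by linarith) (hu.trans hv.symm) fun h =>
        hAC (by rw [add_assoc, h, add_zero])
      exact volume_zonogon_le (α := 1) (β := 1) (γ := 0) (by simp) (by simp) (by simp)
        (by norm_num) (by simp [hu_eq]) huv hvw huw
  have hle : 3 * √3 / 2 * s ^ 2 ≤ det2 u v + det2 v w + det2 u w := by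
    rw [← ENNReal.ofReal_le_ofReal_iff (by positivity), ← harea]
    exact (measure_mono hsub).trans hvol
  obtain ⟨rfl, hw0, hw1⟩ := eq_rotate_of_le_sum_det2 hu hv hw hle
  have hA : A = o - (u + w) := by
    have : (2 : ℝ) • A = (2 : ℝ) • (o - (u + w)) := by rw [smul_sub, ho]; module
    exact smul_right_injective _ two_ne_zero this
  refine ⟨rotateScale o u, isSimilarity_rotateScale hs o hu, ?_⟩
  rw [stdHexagon, AffineMap.image_convexHull, range_hexVertex, hH]
  simp only [image_insert_eq, image_singleton]
  have e0 : rotateScale o u !₂[1, 0] = A + u + (u + w) := by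
    ext i
    fin_cases i <;> simp [rotateScale, hA] <;> ring
  have e1 : rotateScale o u !₂[1 / 2, √3 / 2] = A + u + (u + w) + w := by
    ext i
    fin_cases i <;> simp [rotateScale, hA, hw0, hw1] <;> ring
  have e2 : rotateScale o u !₂[-1 / 2, √3 / 2] = A + (u + w) + w := by
    ext i
    fin_cases i <;> simp [rotateScale, hA, hw0, hw1] <;> ring
  have e3 : rotateScale o u !₂[-1, 0] = A + w := by
    ext i
    fin_cases i <;> simp [rotateScale, hA] <;> ring
  have e4 : rotateScale o u !₂[-1 / 2, -√3 / 2] = A := by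
    ext i
    fin_cases i <;> simp [rotateScale, hA, hw0, hw1] <;> ring
  have e5 : rotateScale o u !₂[1 / 2, -√3 / 2] = A + u := by
    ext i
    fin_cases i <;> simp [rotateScale, hA, hw0, hw1] <;> ring
  rw [e0, e1, e2, e3, e4, e5]
  congr 1
  ext x
  simp only [mem_insert_iff, mem_singleton_iff]
  tauto

/-- A centrally symmetric convex hexagon with six distinct vertices,
all of whose sides have length `s > 0` and whose area equals `(3√3/2)s²`, is a regular
hexagon. -/
theorem statement8 (s : ℝ) (hs : 0 < s) (H : Set E2) (A B C D E F : E2)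
    (hvert : HexWithVertices A B C D E F H)
    (horder : CCWList A B C D E F ∨ CCWList F E D C B A)
    (hdistinct : [A, B, C, D, E, F].Pairwise (· ≠ ·))
    (hAB : dist A B = s) (hBC : dist B C = s) (hCD : dist C D = s)
    (hDE : dist D E = s) (hEF : dist E F = s) (hFA : dist F A = s)
    (harea : volume H = ENNReal.ofReal (3 * Real.sqrt 3 / 2 * s ^ 2)) :
    IsRegularHexagon H := by
  simp only [List.pairwise_cons, List.mem_cons] at hdistinct
  rcases horder with h | h
  · exact isRegularHexagon_of_ccwList hs hvert h (hdistinct.1 C (by simp)) hAB hBC hCD harea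
  · have hFD : F ≠ D := (hdistinct.2.2.2.1 F (by simp)).symm
    obtain ⟨hH, ⟨o, rfl, rfl, rfl⟩, hint⟩ := hvert
    refine isRegularHexagon_of_ccwList hs ⟨?_, ⟨o, ?_, ?_, ?_⟩, hint⟩ h hFD
      ((dist_comm _ _).trans hEF) ((dist_comm _ _).trans hDE) ((dist_comm _ _).trans hCD) harea
    · rw [hH]
      congr 1
      ext x
      simp only [mem_insert_iff, mem_singleton_iff]
      tauto
    all_goals abel
end
end

section
/- Let H* be a regular hexagon with |H*| = 1. Then for every H ∈ 𝓗 with |H| = 1 one has 𝓗¹(∂H*) ≤ 𝓗¹(∂H); that is, among convex polygons of unit area that tile the plane by translations, the regular hexagon minimizes the perimeter. -/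
open MeasureTheory Metric Filter Real Set
open scoped Topology ENNReal NNReal RealInnerProductSpace

noncomputable section

theorem norm_sq_E2 (u : E2) : ‖u‖ ^ 2 = u 0 ^ 2 + u 1 ^ 2 := by
  rw [EuclideanSpace.norm_sq_eq]; simp

/-- Polar form of a vector of the plane. -/
theorem exists_polar (u : E2) :
    ∃ x y : ℝ, x ^ 2 + y ^ 2 = 1 ∧ u 0 = ‖u‖ * x ∧ u 1 = ‖u‖ * y := by
  by_cases h : ‖u‖ = 0
  · refine ⟨1, 0, by norm_num, ?_, ?_⟩ <;> simp [norm_eq_zero.mp h]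
  · refine ⟨u 0 / ‖u‖, u 1 / ‖u‖, ?_, by field_simp, by field_simp⟩
    rw [div_pow, div_pow, ← add_div, ← norm_sq_E2, div_self (pow_ne_zero 2 h)]

theorem sq_sum_det2_le (u v w : E2) :
    12 * (det2 u v + det2 v w + det2 u w) ^ 2 ≤ (‖u‖ + ‖v‖ + ‖w‖) ^ 4 := by
  obtain ⟨x₁, y₁, h₁, hu0, hu1⟩ := exists_polar u
  obtain ⟨x₂, y₂, h₂, hv0, hv1⟩ := exists_polar v
  obtain ⟨x₃, y₃, h₃, hw0, hw1⟩ := exists_polar w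
  simp only [det2, hu0, hu1, hv0, hv1, hw0, hw1]
  have ha := norm_nonneg u
  have hb := norm_nonneg v
  have hc := norm_nonneg w
  generalize ‖u‖ = a at *
  generalize ‖v‖ = b at *
  generalize ‖w‖ = c at *
  clear hu0 hu1 hv0 hv1 hw0 hw1
  set s := x₁ * y₂ - y₁ * x₂ with hs
  set t := x₂ * y₃ - y₂ * x₃ with ht
  set k := x₁ * y₃ - y₁ * x₃ with hk
  have e1 : 4 * (a * b * s ^ 2 + b * c * t ^ 2 + a * c * k ^ 2) ≤ (a + b + c) ^ 2 := by
    have key : (a + b + c) ^ 2 - 4 * (a * b * s ^ 2 + b * c * t ^ 2 + a * c * k ^ 2) =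
        (a * (x₁ ^ 2 - y₁ ^ 2) + b * (x₂ ^ 2 - y₂ ^ 2) + c * (x₃ ^ 2 - y₃ ^ 2)) ^ 2 +
        (2 * a * x₁ * y₁ + 2 * b * x₂ * y₂ + 2 * c * x₃ * y₃) ^ 2 := by
      have g1 : y₁ ^ 2 = 1 - x₁ ^ 2 := by linarith
      have g2 : y₂ ^ 2 = 1 - x₂ ^ 2 := by linarith
      have g3 : y₃ ^ 2 = 1 - x₃ ^ 2 := by linarith
      rw [hs, ht, hk]
      ring_nf
      rw [show y₁ ^ 4 = (y₁ ^ 2) ^ 2 by ring, show y₂ ^ 4 = (y₂ ^ 2) ^ 2 by ring,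
        show y₃ ^ 4 = (y₃ ^ 2) ^ 2 by ring, g1, g2, g3]
      ring
    nlinarith [sq_nonneg (a * (x₁ ^ 2 - y₁ ^ 2) + b * (x₂ ^ 2 - y₂ ^ 2) + c * (x₃ ^ 2 - y₃ ^ 2)),
      sq_nonneg (2 * a * x₁ * y₁ + 2 * b * x₂ * y₂ + 2 * c * x₃ * y₃)]
  have hab := mul_nonneg ha hb
  have hbc := mul_nonneg hb hc
  have hac := mul_nonneg ha hc
  have e2 : (a * b * s + b * c * t + a * c * k) ^ 2 ≤
      (a * b + b * c + a * c) * (a * b * s ^ 2 + b * c * t ^ 2 + a * c * k ^ 2) := by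
    nlinarith [mul_nonneg (mul_nonneg hab hbc) (sq_nonneg (s - t)),
      mul_nonneg (mul_nonneg hab hac) (sq_nonneg (s - k)),
      mul_nonneg (mul_nonneg hbc hac) (sq_nonneg (t - k))]
  have e3 : 3 * (a * b + b * c + a * c) ≤ (a + b + c) ^ 2 := by
    nlinarith [sq_nonneg (a - b), sq_nonneg (b - c), sq_nonneg (a - c)]
  have e4 : a * x₁ * (b * y₂) - a * y₁ * (b * x₂) + (b * x₂ * (c * y₃) - b * y₂ * (c * x₃)) +
      (a * x₁ * (c * y₃) - a * y₁ * (c * x₃)) = a * b * s + b * c * t + a * c * k := by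
    rw [hs, ht, hk]; ring
  rw [e4]
  calc 12 * (a * b * s + b * c * t + a * c * k) ^ 2
      ≤ (3 * (a * b + b * c + a * c)) *
        (4 * (a * b * s ^ 2 + b * c * t ^ 2 + a * c * k ^ 2)) := by linarith
    _ ≤ (a + b + c) ^ 2 * (a + b + c) ^ 2 := by
        apply mul_le_mul e3 e1 (by positivity) (by positivity)
    _ = (a + b + c) ^ 4 := by ring

theorem volume_det2_eq_zero {v : E2} (hv : v ≠ 0) : volume {x : E2 | det2 v x = 0} = 0 := by
  let S : Submodule ℝ E2 :=
    { carrier := {x : E2 | det2 v x = 0}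
      add_mem' := by
        intro x y hx hy
        simp only [det2, mem_ofPred_eq, PiLp.add_apply] at *
        linarith
      zero_mem' := by simp [det2]
      smul_mem' := by
        intro c x hx
        simp only [det2, mem_ofPred_eq, PiLp.smul_apply, smul_eq_mul] at *
        linear_combination c * hx }
  refine Measure.addHaar_submodule volume S fun h => hv ?_
  have h0 : (!₂[1, 0] : E2) ∈ S := h ▸ Submodule.mem_top
  have h1 : (!₂[0, 1] : E2) ∈ S := h ▸ Submodule.mem_top
  have h0' : det2 v !₂[1, 0] = 0 := h0
  have h1' : det2 v !₂[0, 1] = 0 := h1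
  simp [det2] at h0' h1'
  ext i
  fin_cases i
  · exact h1'
  · exact h0'

theorem volume_unit_triangle :
    volume {x : E2 | 0 ≤ x 0 ∧ 0 ≤ x 1 ∧ x 0 + x 1 ≤ 1} = ENNReal.ofReal (1 / 2) := by
  have hm : MeasurableSet {z : ℝ × ℝ | 0 ≤ z.1 ∧ 0 ≤ z.2 ∧ z.1 + z.2 ≤ 1} := by
    exact (measurableSet_le measurable_const measurable_fst).inter
      ((measurableSet_le measurable_const measurable_snd).inter
        (measurableSet_le (measurable_fst.add measurable_snd) measurable_const))
  have h1 := (volume_preserving_finTwoArrow ℝ).comp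
    (EuclideanSpace.volume_preserving_symm_measurableEquiv_toLp (Fin 2))
  have h2 := h1.measure_preimage hm.nullMeasurableSet
  refine Eq.trans ?_ (h2.trans ?_)
  · rfl
  rw [Measure.volume_eq_prod, Measure.prod_apply hm]
  have h3 : ∀ a : ℝ, volume (Prod.mk a ⁻¹' {z : ℝ × ℝ | 0 ≤ z.1 ∧ 0 ≤ z.2 ∧ z.1 + z.2 ≤ 1}) =
      (Icc (0 : ℝ) 1).indicator (fun a => ENNReal.ofReal (1 - a)) a := by
    intro a
    by_cases ha : a ∈ Icc (0 : ℝ) 1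
    · rw [indicator_of_mem ha]
      have : Prod.mk a ⁻¹' {z : ℝ × ℝ | 0 ≤ z.1 ∧ 0 ≤ z.2 ∧ z.1 + z.2 ≤ 1} = Icc 0 (1 - a) := by
        ext y
        simp only [mem_preimage, mem_ofPred_eq, mem_Icc]
        exact ⟨fun h => ⟨h.2.1, by linarith [h.2.2]⟩, fun h => ⟨ha.1, h.1, by linarith [h.2]⟩⟩
      rw [this, Real.volume_Icc, sub_zero]
    · rw [indicator_of_notMem ha]
      have : Prod.mk a ⁻¹' {z : ℝ × ℝ | 0 ≤ z.1 ∧ 0 ≤ z.2 ∧ z.1 + z.2 ≤ 1} = ∅ := by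
        ext y
        simp only [mem_preimage, mem_ofPred_eq, mem_empty_iff_false, iff_false]
        exact fun h => ha ⟨h.1, by linarith [h.2.1, h.2.2]⟩
      rw [this, measure_empty]
  simp_rw [h3]
  rw [lintegral_indicator measurableSet_Icc, ← ofReal_integral_eq_lintegral_ofReal]
  · rw [integral_Icc_eq_integral_Ioc, ← intervalIntegral.integral_of_le zero_le_one]
    rw [intervalIntegral.integral_sub (by simp) (by simp), intervalIntegral.integral_const,
      integral_id]
    norm_num
  · exact (by fun_prop : Continuous fun a : ℝ => 1 - a).integrableOn_Icc
  · filter_upwards [ae_restrict_mem measurableSet_Icc] with a ha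
    simpa using ha.2

/-- The triangle with vertices `0, p, q`, when `0 < det2 p q`. -/
def tri (p q : E2) : Set E2 := {x | 0 ≤ det2 p x ∧ 0 ≤ det2 x q ∧ det2 x (q - p) ≤ det2 p q}

theorem volume_tri {p q : E2} (h : 0 < det2 p q) :
    volume (tri p q) = ENNReal.ofReal (det2 p q / 2) := by
  let f : E2 →ₗ[ℝ] E2 := Matrix.toEuclideanLin !![p 0, q 0; p 1, q 1]
  have hdet : LinearMap.det f = det2 p q := by
    simp only [f, Matrix.toLpLin_eq_toLin, LinearMap.det_toLin]
    rw [Matrix.det_fin_two_of]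
    simp only [det2]; ring
  have himg : tri p q = f '' {x : E2 | 0 ≤ x 0 ∧ 0 ≤ x 1 ∧ x 0 + x 1 ≤ 1} := by
    ext x
    constructor
    · rintro ⟨h1, h2, h3⟩
      refine ⟨!₂[det2 x q / det2 p q, det2 p x / det2 p q], ⟨?_, ?_, ?_⟩, ?_⟩
      · simp; positivity
      · simp; positivity
      · simp only [Matrix.cons_val_zero, Matrix.cons_val_one]
        rw [← add_div, div_le_one h]
        simp only [det2, PiLp.sub_apply] at *
        linarith
      · have hne := h.ne'
        ext i
        fin_cases i <;> simp [f, Matrix.toLpLin_apply] <;>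
          field_simp <;> simp only [det2] <;> ring
    · rintro ⟨y, ⟨h1, h2, h3⟩, rfl⟩
      simp [tri, det2, f, Matrix.toLpLin_apply, dotProduct, Fin.sum_univ_two]
      simp only [det2] at h
      refine ⟨?_, ?_, ?_⟩ <;> nlinarith [mul_nonneg h1 h.le, mul_nonneg h2 h.le]
  rw [himg, Measure.addHaar_image_linearMap, hdet, volume_unit_triangle, abs_of_pos h,
    ← ENNReal.ofReal_mul h.le]
  congr 1; ring

/-- The centrally symmetric hexagon spanned by `p, q, r`. -/
def symHex (p q r : E2) : Set E2 := convexHull ℝ {p, q, r, -p, -q, -r}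

/-- The points `p, q, r, -p, -q, -r` are, in this order, the (possibly degenerate) vertices of a
convex hexagon traversed counterclockwise. -/
structure CyclicOrder (p q r : E2) : Prop where
  le_pr : det2 p r ≤ det2 p q + det2 q r
  le_pq : det2 p q ≤ det2 q r + det2 p r
  le_qr : det2 q r ≤ det2 p q + det2 p r
  pos : 0 < det2 p q + det2 q r + det2 p r

theorem det2_neg_left (u w : E2) : det2 (-u) w = -det2 u w := by
  simp only [det2, PiLp.neg_apply]; ring

theorem det2_neg_right (u w : E2) : det2 u (-w) = -det2 u w := by
  simp only [det2, PiLp.neg_apply]; ring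

theorem det2_swap (u w : E2) : det2 u w = -det2 w u := by
  simp only [det2]; ring

theorem symHex_rotate (p q r : E2) : symHex q r (-p) = symHex p q r := by
  unfold symHex
  congr 1
  ext x
  simp only [mem_insert_iff, mem_singleton_iff, neg_neg]
  tauto

theorem symHex_swap (p q r : E2) : symHex p r q = symHex p q r := by
  unfold symHex
  congr 1
  ext x
  simp only [mem_insert_iff, mem_singleton_iff]
  tauto

theorem symHex_neg_right (p q r : E2) : symHex p q (-r) = symHex p q r := by
  unfold symHex
  congr 1
  ext x
  simp only [mem_insert_iff, mem_singleton_iff, neg_neg]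
  tauto

namespace CyclicOrder

variable {p q r : E2}

theorem rotate (h : CyclicOrder p q r) : CyclicOrder q r (-p) := by
  obtain ⟨h1, h2, h3, h4⟩ := h
  constructor <;> simp only [det2, PiLp.neg_apply] at * <;> linarith

theorem det2_nonneg (h : CyclicOrder p q r) : 0 ≤ det2 p q := by
  linarith [h.le_pr, h.le_qr]

theorem ne_zero (h : CyclicOrder p q r) : p ≠ 0 := by
  rintro rfl
  have h1 := h.le_qr
  have h2 := h.pos
  simp [det2] at h1 h2
  linarith

theorem eq_of_det2_eq_zero (h : CyclicOrder p q r) (h0 : det2 p q = 0) : p = q := by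
  have hpr : 0 < det2 p r := by linarith [h.le_qr, h.le_pr, h.pos]
  have h1 : det2 q r = det2 p r := by linarith [h.le_qr, h.le_pr]
  have e0 : det2 p r * (q 0 - p 0) = 0 := by
    simp only [det2] at *
    linear_combination p 0 * h1 + r 0 * h0
  have e1 : det2 p r * (q 1 - p 1) = 0 := by
    simp only [det2] at *
    linear_combination p 1 * h1 + r 1 * h0
  ext i
  fin_cases i
  · have := (mul_eq_zero.mp e0).resolve_left hpr.ne'
    show p 0 = q 0
    linarith
  · have := (mul_eq_zero.mp e1).resolve_left hpr.ne'
    show p 1 = q 1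
    linarith

theorem det2_sub_le (h : CyclicOrder p q r) {x : E2} (hx : x ∈ symHex p q r) :
    det2 x (q - p) ≤ det2 p q := by
  have hconv : Convex ℝ {x : E2 | det2 x (q - p) ≤ det2 p q} := by
    intro x hx y hy a b ha hb hab
    simp only [det2, mem_ofPred_eq, PiLp.add_apply, PiLp.smul_apply, smul_eq_mul,
      PiLp.sub_apply] at *
    calc _ = a * (x 0 * (q 1 - p 1) - x 1 * (q 0 - p 0)) +
          b * (y 0 * (q 1 - p 1) - y 1 * (q 0 - p 0)) := by ring
      _ ≤ a * (p 0 * q 1 - p 1 * q 0) + b * (p 0 * q 1 - p 1 * q 0) :=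
          add_le_add (mul_le_mul_of_nonneg_left hx ha) (mul_le_mul_of_nonneg_left hy hb)
      _ = _ := by rw [← add_mul, hab, one_mul]
  refine convexHull_min ?_ hconv hx
  have := h.det2_nonneg
  obtain ⟨h1, h2, h3, -⟩ := h
  simp only [insert_subset_iff, singleton_subset_iff, det2, mem_ofPred_eq, PiLp.neg_apply,
    PiLp.sub_apply] at *
  refine ⟨?_, ?_, ?_, ?_, ?_, ?_⟩ <;> linarith

theorem volume_tri_le (h : CyclicOrder p q r) :
    volume (tri p q) ≤ ENNReal.ofReal (det2 p q / 2) := by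
  rcases h.det2_nonneg.eq_or_lt with h0 | h0
  · have hpq := h.eq_of_det2_eq_zero h0.symm
    subst hpq
    refine (measure_mono fun x hx => ?_).trans (volume_det2_eq_zero h.ne_zero).le |>.trans zero_le
    have h2 := hx.2.1
    rw [det2_swap] at h2
    exact le_antisymm (by linarith) hx.1
  · exact (volume_tri h0).le

end CyclicOrder

/-- The pairwise disjoint open sectors attached to the edges of a symmetric hexagon. -/
def sector (p q r : E2) : Set E2 := {x | 0 < det2 p x ∧ 0 < det2 x q ∧ 0 < det2 x r}

@[fun_prop]
theorem continuous_det2 {X : Type*} [TopologicalSpace X] {f g : X → E2} (hf : Continuous f)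
    (hg : Continuous g) : Continuous fun x => det2 (f x) (g x) := by
  unfold det2
  fun_prop

theorem measurableSet_sector (p q r : E2) : MeasurableSet (sector p q r) := by
  apply IsOpen.measurableSet
  exact (isOpen_lt continuous_const (by fun_prop : Continuous fun x => det2 p x)).inter
    ((isOpen_lt continuous_const (by fun_prop : Continuous fun x => det2 x q)).inter
      (isOpen_lt continuous_const (by fun_prop : Continuous fun x => det2 x r)))

theorem sum_measure_inter_sector_le (μ : Measure E2) (S : Set E2) (p q r : E2) :
    μ (S ∩ sector p q r) + μ (S ∩ sector q r (-p)) + μ (S ∩ sector r (-p) (-q)) +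
      μ (S ∩ sector (-p) (-q) (-r)) + μ (S ∩ sector (-q) (-r) p) +
      μ (S ∩ sector (-r) p q) ≤ μ S := by
  let t : Fin 6 → Set E2 := ![sector p q r, sector q r (-p), sector r (-p) (-q),
    sector (-p) (-q) (-r), sector (-q) (-r) p, sector (-r) p q]
  have ht : ∀ i, MeasurableSet (t i) := by
    intro i
    fin_cases i <;> exact measurableSet_sector _ _ _
  have hd : ∀ i j, i < j → Disjoint (t i) (t j) := by
    intro i j hij
    rw [Set.disjoint_left]
    fin_cases i <;> fin_cases j <;> first
      | exact absurd hij (by decide)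
      | (rintro x ⟨h1, h2, h3⟩ ⟨h4, h5, h6⟩
         simp only [det2, PiLp.neg_apply] at *
         linarith)
  have hd' : Pairwise (Function.onFun Disjoint t) := by
    intro i j hij
    rcases lt_or_gt_of_ne hij with h | h
    · exact hd i j h
    · exact (hd j i h).symm
  have := sum_measure_le_measure_univ (μ := μ.restrict S) (s := Finset.univ) (t := t)
    (fun i _ => (ht i).nullMeasurableSet) (fun i _ j _ hij => (hd' hij).aedisjoint)
  simp only [Measure.restrict_apply (ht _), Measure.restrict_apply_univ, Fin.sum_univ_six,
    Set.inter_comm _ S] at this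
  exact this

/-- The triangles spanned by the edges and the center cover the plane, up to the edge
inequalities. -/
theorem mem_tri_of_forall_le {p q r x : E2}
    (h1 : det2 x (q - p) ≤ det2 p q) (h2 : det2 x (r - q) ≤ det2 q r)
    (h3 : det2 x (-p - r) ≤ det2 r (-p)) (h4 : det2 x (-q - -p) ≤ det2 (-p) (-q))
    (h5 : det2 x (-r - -q) ≤ det2 (-q) (-r)) (h6 : det2 x (p - -r) ≤ det2 (-r) p) :
    x ∈ tri p q ∪ tri q r ∪ tri r (-p) ∪ tri (-p) (-q) ∪ tri (-q) (-r) ∪ tri (-r) p := by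
  simp only [mem_union, tri, mem_ofPred_eq, h1, h2, h3, h4, h5, h6, and_true]
  simp only [det2_neg_left, det2_swap x]
  rcases le_total 0 (det2 p x) with hp | hp <;> rcases le_total 0 (det2 q x) with hq | hq <;>
    rcases le_total 0 (det2 r x) with hr | hr <;> simp [hp, hq, hr]

namespace CyclicOrder

variable {p q r : E2}

theorem symHex_subset (h : CyclicOrder p q r) : symHex p q r ⊆
    tri p q ∪ tri q r ∪ tri r (-p) ∪ tri (-p) (-q) ∪ tri (-q) (-r) ∪ tri (-r) p := by
  intro x hx
  have h6 := h.rotate.rotate.rotate.rotate.rotate.det2_sub_le (x := x)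
  have h5 := h.rotate.rotate.rotate.rotate.det2_sub_le (x := x)
  have h4 := h.rotate.rotate.rotate.det2_sub_le (x := x)
  have h3 := h.rotate.rotate.det2_sub_le (x := x)
  have h2 := h.rotate.det2_sub_le (x := x)
  simp only [symHex_rotate] at h2 h3 h4 h5 h6
  simp only [neg_neg] at h4 h5 h6
  exact mem_tri_of_forall_le (h.det2_sub_le hx) (h2 hx) (h3 hx) (h4 hx) (h5 hx) (h6 hx)

theorem volume_symHex_le (h : CyclicOrder p q r) :
    volume (symHex p q r) ≤ ENNReal.ofReal (det2 p q + det2 q r + det2 p r) := by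
  have h1 := h.volume_tri_le
  have h2 := h.rotate.volume_tri_le
  have h3 := h.rotate.rotate.volume_tri_le
  have h4 := h.rotate.rotate.rotate.volume_tri_le
  have h5 := h.rotate.rotate.rotate.rotate.volume_tri_le
  have h6 := h.rotate.rotate.rotate.rotate.rotate.volume_tri_le
  have n1 := h.det2_nonneg
  have n2 := h.rotate.det2_nonneg
  have n3 := h.rotate.rotate.det2_nonneg
  simp only [neg_neg, det2_neg_left, det2_neg_right, det2_swap r p] at h2 h3 h4 h5 h6 n3
  refine (measure_mono h.symHex_subset).trans ?_
  calc _ ≤ volume (tri p q) + volume (tri q r) + volume (tri r (-p)) + volume (tri (-p) (-q)) +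
        volume (tri (-q) (-r)) + volume (tri (-r) p) := by
        iterate 4 refine (measure_union_le _ _).trans (add_le_add_left ?_ _)
        exact measure_union_le _ _
    _ ≤ _ := add_le_add (add_le_add (add_le_add (add_le_add (add_le_add h1 h2) h3) h4) h5) h6
    _ = _ := by
        repeat rw [← ENNReal.ofReal_add (by linarith) (by linarith)]
        congr 1
        ring

theorem mem_frontier_of_mem_openSegment (h : CyclicOrder p q r) (hpq : 0 < det2 p q) {x : E2}
    (hx : x ∈ openSegment ℝ p q) : x ∈ frontier (symHex p q r) ∩ sector p q r := by
  obtain ⟨a, b, ha, hb, hab, rfl⟩ := hx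
  have hpr : 0 ≤ det2 p r := by
    have := h.rotate.rotate.det2_nonneg
    simp only [det2_neg_right, det2_swap r p] at this
    linarith
  have hqr := h.rotate.det2_nonneg
  have hsum : 0 < a * det2 p r + b * det2 q r := by
    rcases hpr.eq_or_lt with h0 | h0
    · have : 0 < det2 q r := by linarith [h.le_pq]
      rw [← h0]; positivity
    · positivity
  refine ⟨⟨subset_closure ?_, fun hint => ?_⟩, ?_, ?_, ?_⟩
  · exact (convex_convexHull ℝ _) (subset_convexHull ℝ _ (by simp))
      (subset_convexHull ℝ _ (by simp)) ha.le hb.le hab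
  · have hc : Continuous fun t : ℝ => (1 + t) • (a • p + b • q) := by fun_prop
    have h0 : ∀ᶠ t : ℝ in 𝓝 0, (1 + t) • (a • p + b • q) ∈ symHex p q r := by
      refine hc.continuousAt.eventually_mem (x := 0) ?_
      simpa using mem_interior_iff_mem_nhds.mp hint
    obtain ⟨t, ht0, ht⟩ := ((h0.filter_mono nhdsWithin_le_nhds).and
      (self_mem_nhdsWithin : Ioi (0 : ℝ) ∈ 𝓝[>] 0)).exists
    have := h.det2_sub_le ht0
    have ht' : 0 < t := ht
    have e : det2 ((1 + t) • (a • p + b • q)) (q - p) = (1 + t) * ((a + b) * det2 p q) := by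
      simp only [det2, PiLp.add_apply, PiLp.smul_apply, smul_eq_mul, PiLp.sub_apply]
      ring
    rw [e, hab] at this
    nlinarith
  · have : det2 p (a • p + b • q) = b * det2 p q := by
      simp only [det2, PiLp.add_apply, PiLp.smul_apply, smul_eq_mul]; ring
    rw [this]; positivity
  · have : det2 (a • p + b • q) q = a * det2 p q := by
      simp only [det2, PiLp.add_apply, PiLp.smul_apply, smul_eq_mul]; ring
    rw [this]; positivity
  · have : det2 (a • p + b • q) r = a * det2 p r + b * det2 q r := by
      simp only [det2, PiLp.add_apply, PiLp.smul_apply, smul_eq_mul]; ring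
    rwa [this]

theorem norm_sub_le_hausdorffMeasure (h : CyclicOrder p q r) :
    ENNReal.ofReal ‖q - p‖ ≤ μH[1] (frontier (symHex p q r) ∩ sector p q r) := by
  rcases h.det2_nonneg.eq_or_lt with h0 | h0
  · simp [h.eq_of_det2_eq_zero h0.symm]
  · have hseg : μH[1] (segment ℝ p q) ≤ μH[1] (openSegment ℝ p q) := by
      rw [← insert_endpoints_openSegment]
      have := Measure.nullSingletonClass_hausdorff E2 (d := 1) one_pos
      rw [measure_congr (insert_ae_eq_self _ _), measure_congr (insert_ae_eq_self _ _)]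
    rw [hausdorffMeasure_segment, edist_dist, dist_comm, dist_eq_norm] at hseg
    exact hseg.trans (measure_mono fun x hx => h.mem_frontier_of_mem_openSegment h0 hx)

theorem le_hausdorffMeasure_frontier (h : CyclicOrder p q r) :
    ENNReal.ofReal (2 * (‖q - p‖ + ‖r - q‖ + ‖-p - r‖)) ≤ μH[1] (frontier (symHex p q r)) := by
  refine le_trans ?_ (sum_measure_inter_sector_le μH[1] (frontier (symHex p q r)) p q r)
  have h1 := h.norm_sub_le_hausdorffMeasure
  have h2 := h.rotate.norm_sub_le_hausdorffMeasure
  have h3 := h.rotate.rotate.norm_sub_le_hausdorffMeasure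
  have h4 := h.rotate.rotate.rotate.norm_sub_le_hausdorffMeasure
  have h5 := h.rotate.rotate.rotate.rotate.norm_sub_le_hausdorffMeasure
  have h6 := h.rotate.rotate.rotate.rotate.rotate.norm_sub_le_hausdorffMeasure
  simp only [symHex_rotate] at h2 h3 h4 h5 h6
  simp only [neg_neg] at h4 h5 h6
  refine le_trans (le_of_eq ?_)
    (add_le_add (add_le_add (add_le_add (add_le_add (add_le_add h1 h2) h3) h4) h5) h6)
  repeat rw [← ENNReal.ofReal_add (by positivity) (by positivity)]
  have e4 : ‖-q - -p‖ = ‖q - p‖ := by rw [← norm_neg]; congr 1; abel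
  have e5 : ‖-r - -q‖ = ‖r - q‖ := by rw [← norm_neg]; congr 1; abel
  have e6 : ‖p - -r‖ = ‖-p - r‖ := by rw [← norm_neg]; congr 1; abel
  rw [e4, e5, e6]
  congr 1
  ring

end CyclicOrder

theorem smul_add_smul_mem_symHex {p q r u v : E2} (hu : u ∈ symHex p q r) (hv : v ∈ symHex p q r)
    {a b : ℝ} (ha : 0 ≤ a) (hb : 0 ≤ b) (hab : a + b ≤ 1) : a • u + b • v ∈ symHex p q r := by
  have hconv : Convex ℝ (symHex p q r) := convex_convexHull ℝ _
  have h0 : (0 : E2) ∈ symHex p q r := by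
    have := hconv (subset_convexHull ℝ _ (by simp : p ∈ ({p, q, r, -p, -q, -r} : Set E2)))
      (subset_convexHull ℝ _ (by simp : -p ∈ ({p, q, r, -p, -q, -r} : Set E2)))
      (by norm_num : (0 : ℝ) ≤ 1 / 2) (by norm_num : (0 : ℝ) ≤ 1 / 2) (by norm_num)
    simpa using this
  have := hconv.sum_mem (t := Finset.univ) (w := ![a, b, 1 - a - b]) (z := ![u, v, 0])
    (by intro i _; fin_cases i <;> simp <;> linarith)
    (by simp [Fin.sum_univ_three])
    (by intro i _; fin_cases i <;> simp [hu, hv, h0])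
  simpa [Fin.sum_univ_three] using this

theorem tri_subset_symHex {p q : E2} (r : E2) (h : 0 < det2 p q) : tri p q ⊆ symHex p q r := by
  rintro x ⟨h1, h2, h3⟩
  have hx : x = (det2 x q / det2 p q) • p + (det2 p x / det2 p q) • q := by
    have hne := h.ne'
    ext i
    fin_cases i <;> simp <;> field_simp <;> simp only [det2] <;> ring
  rw [hx]
  refine smul_add_smul_mem_symHex (subset_convexHull ℝ _ (by simp))
    (subset_convexHull ℝ _ (by simp)) (by positivity) (by positivity) ?_
  rw [← add_div, div_le_one h]
  simp only [det2, PiLp.sub_apply] at *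
  linarith

theorem symHex_eq_of_lt {p q r : E2} (hpq : 0 ≤ det2 p q) (hqr : 0 ≤ det2 q r)
    (h : det2 p q + det2 q r < det2 p r) : symHex p p r = symHex p q r := by
  have hpr : 0 < det2 p r := by linarith
  have hne := hpr.ne'
  have hq : q = (det2 q r / det2 p r) • p + (det2 p q / det2 p r) • r := by
    ext i
    fin_cases i <;> simp <;> field_simp <;> simp only [det2] <;> ring
  have hq' : -q = (det2 q r / det2 p r) • (-p) + (det2 p q / det2 p r) • (-r) := by
    rw [smul_neg, smul_neg, ← neg_add, ← hq]
  have hle : det2 q r / det2 p r + det2 p q / det2 p r ≤ 1 := by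
    rw [← add_div, div_le_one hpr]; linarith
  apply Subset.antisymm
  · refine convexHull_mono ?_
    simp [insert_subset_iff]
  · refine convexHull_min ?_ (convex_convexHull ℝ _)
    have hp : p ∈ symHex p p r := subset_convexHull ℝ _ (by simp)
    have hr : r ∈ symHex p p r := subset_convexHull ℝ _ (by simp)
    have hnp : -p ∈ symHex p p r := subset_convexHull ℝ _ (by simp)
    have hnr : -r ∈ symHex p p r := subset_convexHull ℝ _ (by simp)
    have h1 : q ∈ symHex p p r := hq ▸ smul_add_smul_mem_symHex hp hr (by positivity)
      (by positivity) hle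
    have h2 : -q ∈ symHex p p r := hq' ▸ smul_add_smul_mem_symHex hnp hnr (by positivity)
      (by positivity) hle
    simp only [insert_subset_iff, singleton_subset_iff]
    exact ⟨hp, h1, hr, hnp, h2, hnr⟩

theorem cyclicOrder_self {p r : E2} (h : 0 < det2 p r) : CyclicOrder p p r := by
  have : det2 p p = 0 := by simp only [det2]; ring
  constructor <;> linarith

theorem volume_symHex_eq_zero {p q r v : E2} (hv : v ≠ 0) (hp : det2 v p = 0) (hq : det2 v q = 0)
    (hr : det2 v r = 0) : volume (symHex p q r) = 0 := by
  refine measure_mono_null (convexHull_min ?_ ?_) (volume_det2_eq_zero hv)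
  · simp [insert_subset_iff, det2_neg_right, hp, hq, hr]
  · intro x hx y hy a b _ _ _
    simp only [det2, mem_ofPred_eq, PiLp.add_apply, PiLp.smul_apply, smul_eq_mul] at *
    linear_combination a * hx + b * hy

theorem exists_cyclicOrder_of_nonneg {p q r : E2} (hpq : 0 ≤ det2 p q) (hqr : 0 ≤ det2 q r)
    (hpr : 0 ≤ det2 p r) (hvol : volume (symHex p q r) ≠ 0) :
    ∃ p' q' r', CyclicOrder p' q' r' ∧ symHex p' q' r' = symHex p q r := by
  by_cases h1 : det2 p q + det2 q r < det2 p r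
  · exact ⟨p, p, r, cyclicOrder_self (by linarith), symHex_eq_of_lt hpq hqr h1⟩
  by_cases h2 : det2 q r + det2 p r < det2 p q
  · have e := symHex_eq_of_lt (p := q) (q := r) (r := -p) hqr
      (by rw [det2_neg_right, det2_swap]; linarith)
      (by rw [det2_neg_right, det2_neg_right, det2_swap r, det2_swap q p]; linarith)
    refine ⟨q, q, -p, cyclicOrder_self ?_, e.trans (symHex_rotate _ _ _)⟩
    rw [det2_neg_right, det2_swap]; linarith
  by_cases h3 : det2 p q + det2 p r < det2 q r
  · have e := symHex_eq_of_lt (p := r) (q := -p) (r := -q)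
      (by rw [det2_neg_right, det2_swap]; linarith)
      (by rw [det2_neg_right, det2_neg_left]; linarith)
      (by simp only [det2_neg_right, det2_neg_left, det2_swap r]; linarith)
    refine ⟨r, r, -q, cyclicOrder_self ?_,
      e.trans ((symHex_rotate _ _ _).trans (symHex_rotate _ _ _))⟩
    rw [det2_neg_right, det2_swap]; linarith
  refine ⟨p, q, r, ⟨by linarith, by linarith, by linarith, ?_⟩, rfl⟩
  by_contra h4
  have e1 : det2 p q = 0 := by linarith
  have e2 : det2 q r = 0 := by linarith
  have e3 : det2 p r = 0 := by linarith
  have hself : ∀ u, det2 u u = 0 := fun u => by simp only [det2]; ring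
  by_cases hp : p = 0
  · by_cases hq : q = 0
    · by_cases hr : r = 0
      · subst hp hq hr
        refine hvol (volume_symHex_eq_zero (v := !₂[1, 0]) ?_ ?_ ?_ ?_)
        · intro h
          simpa using congrArg (fun x : E2 => x 0) h
        all_goals simp [det2]
      · exact hvol (volume_symHex_eq_zero hr (by rw [det2_swap, e3, neg_zero])
          (by rw [det2_swap, e2, neg_zero]) (hself r))
    · exact hvol (volume_symHex_eq_zero hq (by rw [det2_swap, e1, neg_zero]) (hself q) e2)
  · exact hvol (volume_symHex_eq_zero hp (hself p) e1 e3)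

/-- Every centrally symmetric hexagon admits generators in cyclic order. -/
theorem exists_cyclicOrder {p q r : E2} (hvol : volume (symHex p q r) ≠ 0) :
    ∃ p' q' r', CyclicOrder p' q' r' ∧ symHex p' q' r' = symHex p q r := by
  wlog hpq : 0 ≤ det2 p q generalizing q
  · have e : symHex p (-q) r = symHex p q r := by
      rw [symHex_swap, symHex_neg_right, symHex_swap]
    have := this (q := -q) (e ▸ hvol) (by rw [det2_neg_right]; linarith)
    rwa [e] at this
  wlog hpr : 0 ≤ det2 p r generalizing r
  · have := this (r := -r) (symHex_neg_right p q r ▸ hvol) (by rw [det2_neg_right]; linarith)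
    rwa [symHex_neg_right] at this
  rcases le_total 0 (det2 q r) with h | h
  · exact exists_cyclicOrder_of_nonneg hpq h hpr hvol
  · rw [← symHex_swap] at hvol ⊢
    exact exists_cyclicOrder_of_nonneg hpr (by rw [det2_swap]; linarith) hpq hvol

namespace CyclicOrder

variable {p q r : E2}

theorem le_volume_inter_sector (h : CyclicOrder p q r) (hpq : 0 < det2 p q) (hqr : 0 < det2 q r)
    (hpr : 0 < det2 p r) :
    ENNReal.ofReal (det2 p q / 2) ≤ volume (symHex p q r ∩ sector p q r) := by
  rw [← volume_tri hpq]
  have hsub : tri p q ⊆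
      (symHex p q r ∩ sector p q r) ∪ ({x | det2 p x = 0} ∪ {x | det2 q x = 0}) := by
    intro x hx
    by_cases h1 : det2 p x = 0
    · exact Or.inr (Or.inl h1)
    by_cases h2 : det2 q x = 0
    · exact Or.inr (Or.inr h2)
    have h1' : 0 < det2 p x := lt_of_le_of_ne hx.1 (Ne.symm h1)
    have h2' : 0 < det2 x q := by
      refine lt_of_le_of_ne hx.2.1 fun h0 => h2 ?_
      rw [det2_swap, ← h0, neg_zero]
    refine Or.inl ⟨tri_subset_symHex r hpq hx, h1', h2', ?_⟩
    refine pos_of_mul_pos_right (a := det2 p q) ?_ hpq.le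
    have : det2 p q * det2 x r = det2 x q * det2 p r + det2 p x * det2 q r := by
      simp only [det2]; ring
    rw [this]
    positivity
  refine (measure_mono hsub).trans ((measure_union_le _ _).trans ?_)
  rw [measure_union_null (volume_det2_eq_zero h.ne_zero) (volume_det2_eq_zero h.rotate.ne_zero),
    add_zero]

theorem le_volume_symHex (h : CyclicOrder p q r) (hpq : 0 < det2 p q) (hqr : 0 < det2 q r)
    (hpr : 0 < det2 p r) :
    ENNReal.ofReal (det2 p q + det2 q r + det2 p r) ≤ volume (symHex p q r) := by
  refine le_trans ?_ (sum_measure_inter_sector_le volume (symHex p q r) p q r)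
  have h1 := h.le_volume_inter_sector hpq hqr hpr
  have h2 := h.rotate.le_volume_inter_sector
  have h3 := h.rotate.rotate.le_volume_inter_sector
  have h4 := h.rotate.rotate.rotate.le_volume_inter_sector
  have h5 := h.rotate.rotate.rotate.rotate.le_volume_inter_sector
  have h6 := h.rotate.rotate.rotate.rotate.rotate.le_volume_inter_sector
  simp only [symHex_rotate] at h2 h3 h4 h5 h6
  simp only [neg_neg, det2_neg_left, det2_neg_right, det2_swap r p, det2_swap q p,
    det2_swap r q, hpq, hqr, hpr, forall_const] at h2 h3 h4 h5 h6
  refine le_trans (le_of_eq ?_)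
    (add_le_add (add_le_add (add_le_add (add_le_add (add_le_add h1 h2) h3) h4) h5) h6)
  repeat rw [← ENNReal.ofReal_add (by positivity) (by positivity)]
  congr 1
  ring

/-- A point of the triangle over one edge which does not lie on this edge strictly satisfies the
inequalities of all edges. -/
theorem det2_sub_lt {u v x : E2} (h : CyclicOrder p q r) (hpq : 0 < det2 p q)
    (hu : u ∈ symHex p q r) (hv : v ∈ symHex p q r) (huv : 0 < det2 u v) (hx : x ∈ tri u v)
    (hlt : det2 x (v - u) < det2 u v) : det2 x (q - p) < det2 p q := by
  have h1 := h.det2_sub_le hu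
  have h2 := h.det2_sub_le hv
  refine lt_of_mul_lt_mul_left (a := det2 u v) ?_ huv.le
  calc det2 u v * det2 x (q - p)
      = det2 x v * det2 u (q - p) + det2 u x * det2 v (q - p) := by
        simp only [det2, PiLp.sub_apply]; ring
    _ ≤ det2 x v * det2 p q + det2 u x * det2 p q :=
        add_le_add (mul_le_mul_of_nonneg_left h1 hx.2.1) (mul_le_mul_of_nonneg_left h2 hx.1)
    _ = det2 x (v - u) * det2 p q := by simp only [det2, PiLp.sub_apply]; ring
    _ < det2 u v * det2 p q := mul_lt_mul_of_pos_right hlt hpq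

theorem mem_segment_of_mem_frontier (h : CyclicOrder p q r) (hpq : 0 < det2 p q)
    (hqr : 0 < det2 q r) (hpr : 0 < det2 p r) {x : E2} (hx : x ∈ tri p q)
    (hfr : x ∈ frontier (symHex p q r)) : x ∈ segment ℝ p q := by
  rcases hx.2.2.eq_or_lt with heq | hlt
  · have hne := hpq.ne'
    refine ⟨det2 x q / det2 p q, det2 p x / det2 p q, div_nonneg hx.2.1 hpq.le,
      div_nonneg hx.1 hpq.le, ?_, ?_⟩
    · rw [← add_div, div_eq_one_iff_eq hne, ← heq]
      simp only [det2, PiLp.sub_apply]; ring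
    · ext i
      fin_cases i <;> simp <;> field_simp <;> simp only [det2] <;> ring
  · exfalso
    let U : Set E2 := {y | det2 y (q - p) < det2 p q} ∩ ({y | det2 y (r - q) < det2 q r} ∩
      ({y | det2 y (-p - r) < det2 r (-p)} ∩ ({y | det2 y (-q - -p) < det2 (-p) (-q)} ∩
      ({y | det2 y (-r - -q) < det2 (-q) (-r)} ∩ {y | det2 y (p - -r) < det2 (-r) p}))))
    have hopen : ∀ (c : ℝ) (w : E2), IsOpen {y | det2 y w < c} := fun c w =>
      isOpen_lt (by fun_prop) continuous_const
    have hU : IsOpen U := (hopen _ _).inter ((hopen _ _).inter ((hopen _ _).inter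
      ((hopen _ _).inter ((hopen _ _).inter (hopen _ _)))))
    have e3 : 0 < det2 r (-p) := by rwa [det2_neg_right, ← det2_swap]
    have e4 : 0 < det2 (-p) (-q) := by simpa [det2_neg_right, det2_neg_left] using hpq
    have e5 : 0 < det2 (-q) (-r) := by simpa [det2_neg_right, det2_neg_left] using hqr
    have e6 : 0 < det2 (-r) p := by rwa [det2_neg_left, ← det2_swap]
    have s2 := symHex_rotate p q r
    have s3 := (symHex_rotate q r (-p)).trans s2
    have s4 := (symHex_rotate r (-p) (-q)).trans s3
    have s5 := (symHex_rotate (-p) (-q) (-r)).trans s4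
    have s6 := (symHex_rotate (-q) (-r) (- -p)).trans s5
    have hsub : U ⊆ symHex p q r := by
      rintro y ⟨h1, h2, h3, h4, h5, h6⟩
      have := mem_tri_of_forall_le (le_of_lt h1) (le_of_lt h2) (le_of_lt h3) (le_of_lt h4)
        (le_of_lt h5) (le_of_lt h6)
      rcases this with ((((h | h) | h) | h) | h) | h
      · exact tri_subset_symHex r hpq h
      · exact s2 ▸ tri_subset_symHex (-p) hqr h
      · exact s3 ▸ tri_subset_symHex (-q) e3 h
      · exact s4 ▸ tri_subset_symHex (-r) e4 h
      · exact s5 ▸ tri_subset_symHex (- -p) e5 h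
      · rw [neg_neg] at s6
        exact s6 ▸ tri_subset_symHex (- -q) e6 h
    have hp : p ∈ symHex p q r := subset_convexHull ℝ _ (by simp)
    have hq : q ∈ symHex p q r := subset_convexHull ℝ _ (by simp)
    have hxU : x ∈ U := by
      have h5 := h.rotate.rotate.rotate.rotate
      have h6 := h5.rotate
      simp only [neg_neg] at s6 h6
      exact ⟨hlt, h.rotate.det2_sub_lt hqr (s2 ▸ hp) (s2 ▸ hq) hpq hx hlt,
        h.rotate.rotate.det2_sub_lt e3 (s3 ▸ hp) (s3 ▸ hq) hpq hx hlt,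
        h.rotate.rotate.rotate.det2_sub_lt e4 (s4 ▸ hp) (s4 ▸ hq) hpq hx hlt,
        h5.det2_sub_lt e5 (s5 ▸ hp) (s5 ▸ hq) hpq hx hlt,
        h6.det2_sub_lt e6 (s6 ▸ hp) (s6 ▸ hq) hpq hx hlt⟩
    exact hfr.2 (interior_maximal hsub hU hxU)

theorem hausdorffMeasure_frontier_le (h : CyclicOrder p q r) (hpq : 0 < det2 p q)
    (hqr : 0 < det2 q r) (hpr : 0 < det2 p r) :
    μH[1] (frontier (symHex p q r)) ≤
      ENNReal.ofReal (2 * (‖q - p‖ + ‖r - q‖ + ‖-p - r‖)) := by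
  have h1 := fun x => h.mem_segment_of_mem_frontier hpq hqr hpr (x := x)
  have h2 := fun x => h.rotate.mem_segment_of_mem_frontier (x := x)
  have h3 := fun x => h.rotate.rotate.mem_segment_of_mem_frontier (x := x)
  have h4 := fun x => h.rotate.rotate.rotate.mem_segment_of_mem_frontier (x := x)
  have h5 := fun x => h.rotate.rotate.rotate.rotate.mem_segment_of_mem_frontier (x := x)
  have h6 := fun x => h.rotate.rotate.rotate.rotate.rotate.mem_segment_of_mem_frontier (x := x)
  simp only [symHex_rotate] at h2 h3 h4 h5 h6
  simp only [neg_neg, det2_neg_left, det2_neg_right, det2_swap r p, det2_swap q p,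
    det2_swap r q, hpq, hqr, hpr, forall_const] at h2 h3 h4 h5 h6
  have hclosed : IsClosed (symHex p q r) :=
    (Set.toFinite ({p, q, r, -p, -q, -r} : Set E2)).isClosed_convexHull ℝ
  have hsub : frontier (symHex p q r) ⊆ segment ℝ p q ∪ segment ℝ q r ∪ segment ℝ r (-p) ∪
      segment ℝ (-p) (-q) ∪ segment ℝ (-q) (-r) ∪ segment ℝ (-r) p := by
    intro x hx
    rcases h.symHex_subset (hclosed.frontier_subset hx) with ((((ht | ht) | ht) | ht) | ht) | ht
    · exact Or.inl (Or.inl (Or.inl (Or.inl (Or.inl (h1 x ht hx)))))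
    · exact Or.inl (Or.inl (Or.inl (Or.inl (Or.inr (h2 x ht hx)))))
    · exact Or.inl (Or.inl (Or.inl (Or.inr (h3 x ht hx))))
    · exact Or.inl (Or.inl (Or.inr (h4 x ht hx)))
    · exact Or.inl (Or.inr (h5 x ht hx))
    · exact Or.inr (h6 x ht hx)
  refine (measure_mono hsub).trans ?_
  calc _ ≤ μH[1] (segment ℝ p q) + μH[1] (segment ℝ q r) + μH[1] (segment ℝ r (-p)) +
        μH[1] (segment ℝ (-p) (-q)) + μH[1] (segment ℝ (-q) (-r)) + μH[1] (segment ℝ (-r) p) := by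
        iterate 4 refine (measure_union_le _ _).trans (add_le_add_left ?_ _)
        exact measure_union_le _ _
    _ = ENNReal.ofReal (2 * (‖q - p‖ + ‖r - q‖ + ‖-p - r‖)) := by
        simp only [hausdorffMeasure_segment, edist_dist, dist_eq_norm']
        repeat rw [← ENNReal.ofReal_add (by positivity) (by positivity)]
        have e4 : ‖-q - -p‖ = ‖q - p‖ := by rw [← norm_neg]; congr 1; abel
        have e5 : ‖-r - -q‖ = ‖r - q‖ := by rw [← norm_neg]; congr 1; abel
        have e6 : ‖p - -r‖ = ‖-p - r‖ := by rw [← norm_neg]; congr 1; abel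
        rw [e4, e5, e6]
        congr 1
        ring

end CyclicOrder

theorem hexVertex_zero : hexVertex 0 = !₂[1, 0] := by
  ext i; fin_cases i <;> simp [hexVertex]

theorem hexVertex_one : hexVertex 1 = !₂[1 / 2, √3 / 2] := by
  ext i; fin_cases i <;> simp [hexVertex]

theorem hexVertex_two : hexVertex 2 = !₂[-1 / 2, √3 / 2] := by
  have h : (2 : ℝ) * π / 3 = π - π / 3 := by ring
  ext i
  fin_cases i
  · simp [hexVertex, h, Real.cos_pi_sub]; ring
  · simp [hexVertex, h, Real.sin_pi_sub]

theorem hexVertex_add_three (k : ℕ) : hexVertex (k + 3) = -hexVertex k := by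
  have h : ((k + 3 : ℕ) : ℝ) * π / 3 = k * π / 3 + π := by push_cast; ring
  ext i
  fin_cases i
  · simp only [hexVertex, h, Real.cos_add_pi]; simp
  · simp only [hexVertex, h, Real.sin_add_pi]; simp

theorem stdHexagon_eq : stdHexagon = symHex (hexVertex 0) (hexVertex 1) (hexVertex 2) := by
  unfold stdHexagon symHex
  congr 1
  rw [← hexVertex_add_three 0, ← hexVertex_add_three 1, ← hexVertex_add_three 2]
  ext x
  simp only [mem_range, Fin.exists_fin_succ, mem_insert_iff, mem_singleton_iff, eq_comm (a := x)]
  simp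

theorem det2_hexVertex : det2 (hexVertex 0) (hexVertex 1) = √3 / 2 ∧
    det2 (hexVertex 1) (hexVertex 2) = √3 / 2 ∧ det2 (hexVertex 0) (hexVertex 2) = √3 / 2 := by
  rw [hexVertex_zero, hexVertex_one, hexVertex_two]
  refine ⟨?_, ?_, ?_⟩ <;> simp [det2]
  ring

theorem cyclicOrder_hexVertex : CyclicOrder (hexVertex 0) (hexVertex 1) (hexVertex 2) := by
  obtain ⟨h1, h2, h3⟩ := det2_hexVertex
  have : 0 < √3 := by positivity
  constructor <;> rw [h1, h2, h3] <;> linarith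

theorem le_volume_stdHexagon : ENNReal.ofReal (3 * √3 / 2) ≤ volume stdHexagon := by
  obtain ⟨h1, h2, h3⟩ := det2_hexVertex
  have h0 : 0 < √3 / 2 := by positivity
  have := cyclicOrder_hexVertex.le_volume_symHex (by rwa [h1]) (by rwa [h2]) (by rwa [h3])
  rw [h1, h2, h3, ← stdHexagon_eq] at this
  convert! this using 2
  ring

theorem hausdorffMeasure_frontier_stdHexagon_le :
    μH[1] (frontier stdHexagon) ≤ ENNReal.ofReal 6 := by
  obtain ⟨h1, h2, h3⟩ := det2_hexVertex
  have h0 : 0 < √3 / 2 := by positivity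
  have hs : √3 ^ 2 = 3 := Real.sq_sqrt (by norm_num)
  have := cyclicOrder_hexVertex.hausdorffMeasure_frontier_le (by rwa [h1]) (by rwa [h2])
    (by rwa [h3])
  have hone : ∀ u : E2, u 0 ^ 2 + u 1 ^ 2 = 1 → ‖u‖ = 1 := fun u hu => by
    rw [← norm_sq_E2] at hu
    exact (pow_eq_one_iff_of_nonneg (norm_nonneg u) two_ne_zero).mp hu
  have n1 : ‖hexVertex 1 - hexVertex 0‖ = 1 := by
    apply hone
    rw [hexVertex_zero, hexVertex_one]
    simp [div_pow, hs]; norm_num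
  have n2 : ‖hexVertex 2 - hexVertex 1‖ = 1 := by
    apply hone
    rw [hexVertex_two, hexVertex_one]
    simp; norm_num
  have n3 : ‖-hexVertex 0 - hexVertex 2‖ = 1 := by
    apply hone
    rw [hexVertex_two, hexVertex_zero]
    simp [div_pow, hs]; norm_num
  rw [n1, n2, n3, ← stdHexagon_eq] at this
  convert! this using 2
  norm_num

theorem exists_linearIsometryEquiv {f : E2 → E2} {s : ℝ} (hs : 0 < s)
    (hf : ∀ x y, dist (f x) (f y) = s * dist x y) :
    ∃ L : E2 ≃ₗᵢ[ℝ] E2, ∀ x, f x = f 0 + s • L x := by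
  have hiso : Isometry fun x => s⁻¹ • f x := by
    refine Isometry.of_dist_eq fun x y => ?_
    rw [dist_smul₀, hf, Real.norm_of_nonneg (by positivity), inv_mul_cancel_left₀ hs.ne']
  let g := hiso.affineIsometryOfStrictConvexSpace
  refine ⟨g.linearIsometry.toLinearIsometryEquiv rfl, fun x => ?_⟩
  have h := g.map_vadd 0 x
  simp only [vadd_eq_add, add_zero, g, Isometry.affineIsometryOfStrictConvexSpace_apply] at h
  rw [LinearIsometry.toLinearIsometryEquiv_apply, ← sub_eq_iff_eq_add.mpr h, smul_sub,
    smul_inv_smul₀ hs.ne', smul_inv_smul₀ hs.ne']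
  abel

theorem volume_image_similarity {f : E2 → E2} {s : ℝ} (hs : 0 < s)
    (hf : ∀ x y, dist (f x) (f y) = s * dist x y) (S : Set E2) :
    volume (f '' S) = ENNReal.ofReal (s ^ 2) * volume S := by
  obtain ⟨L, hL⟩ := exists_linearIsometryEquiv hs hf
  have h1 : f '' S = (fun y => f 0 + y) '' ((fun y => s • y) '' (L '' S)) := by
    rw [image_image, image_image]
    exact image_congr fun x _ => hL x
  have h2 : volume (L '' S) = volume S := by
    rw [L.image_eq_preimage_symm]
    exact L.symm.measurePreserving.measure_preimage_emb L.symm.toHomeomorph.measurableEmbedding S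
  rw [h1, image_add_left, measure_preimage_add, image_smul, Measure.addHaar_smul, h2,
    finrank_euclideanSpace_fin, abs_of_nonneg (by positivity)]

theorem frontier_image_similarity {f : E2 → E2} {s : ℝ} (hs : 0 < s)
    (hf : ∀ x y, dist (f x) (f y) = s * dist x y) (S : Set E2) :
    frontier (f '' S) = f '' frontier S := by
  obtain ⟨L, hL⟩ := exists_linearIsometryEquiv hs hf
  let e : E2 ≃ₜ E2 := (L.toHomeomorph.trans (Homeomorph.smulOfNeZero s hs.ne')).trans
    (Homeomorph.addLeft (f 0))
  have : f = e := funext hL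
  rw [this, e.image_frontier]

theorem hausdorffMeasure_image_similarity_le {f : E2 → E2} {s : ℝ} (hs : 0 < s)
    (hf : ∀ x y, dist (f x) (f y) = s * dist x y) (S : Set E2) :
    μH[1] (f '' S) ≤ ENNReal.ofReal s * μH[1] S := by
  have hlip : LipschitzWith s.toNNReal f := LipschitzWith.of_dist_le_mul fun x y => by
    rw [hf, Real.coe_toNNReal s hs.le]
  have := hlip.hausdorffMeasure_image_le zero_le_one S
  rwa [ENNReal.rpow_one] at this

/-- Among convex polygons of unit area tiling the plane by translations,
the regular hexagon minimizes the perimeter. -/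
theorem statement9 (Hstar : Set E2) (hreg : IsRegularHexagon Hstar)
    (hvolstar : volume Hstar = 1) :
    ∀ H : Set E2, Hex H → volume H = 1 →
      μH[1] (frontier Hstar) ≤ μH[1] (frontier H) := by
  rintro H ⟨⟨x₀, p₀, q₀, r₀, hH⟩, -⟩ hvol
  obtain ⟨f, ⟨s, hs, hf⟩, rfl⟩ := hreg
  change H = (fun y => x₀ + y) '' symHex p₀ q₀ r₀ at hH
  have hvol₀ : volume (symHex p₀ q₀ r₀) = 1 := by
    rw [← hvol, hH, image_add_left, measure_preimage_add]
  have hfr : μH[1] (frontier H) = μH[1] (frontier (symHex p₀ q₀ r₀)) := by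
    have e : frontier H = (fun y => x₀ + y) '' frontier (symHex p₀ q₀ r₀) := by
      rw [hH]
      exact ((Homeomorph.addLeft x₀).image_frontier _).symm
    rw [e, (isometry_add_left x₀).hausdorffMeasure_image (Or.inl zero_le_one)]
  obtain ⟨p, q, r, hord, heq⟩ := exists_cyclicOrder (hvol₀.symm ▸ one_ne_zero)
  have hper := hord.le_hausdorffMeasure_frontier
  have harea := hord.volume_symHex_le
  rw [heq, ← hfr] at hper
  rw [heq, hvol₀, ENNReal.one_le_ofReal] at harea
  have hstar : s ^ 2 * (3 * √3 / 2) ≤ 1 := by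
    rw [← ENNReal.ofReal_le_one, ENNReal.ofReal_mul (by positivity), ← hvolstar,
      volume_image_similarity hs hf]
    gcongr
    exact le_volume_stdHexagon
  have hiso := sq_sum_det2_le (q - p) (r - q) (-p - r)
  have hdet : det2 (q - p) (r - q) + det2 (r - q) (-p - r) + det2 (q - p) (-p - r) =
      det2 p q + det2 q r + det2 p r := by
    simp only [det2, PiLp.sub_apply, PiLp.neg_apply]; ring
  rw [hdet] at hiso
  set l := ‖q - p‖ + ‖r - q‖ + ‖-p - r‖ with hl
  have hl0 : 0 ≤ l := by positivity
  have hsl : 3 * s ≤ l := by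
    refine le_of_pow_le_pow_left₀ (n := 4) (by norm_num) hl0 ?_
    have h3 : √3 ^ 2 = 3 := Real.sq_sqrt (by norm_num)
    have hsq : (s ^ 2 * (3 * √3 / 2)) ^ 2 ≤ 1 := pow_le_one₀ (by positivity) hstar
    have hsq' : 1 ≤ (det2 p q + det2 q r + det2 p r) ^ 2 := one_le_pow₀ harea
    have e : (s ^ 2 * (3 * √3 / 2)) ^ 2 = s ^ 4 * (27 / 4) := by
      calc _ = s ^ 4 * (9 / 4 * √3 ^ 2) := by ring
        _ = _ := by rw [h3]; ring
    calc (3 * s) ^ 4 = 12 * (s ^ 4 * (27 / 4)) := by ring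
      _ ≤ 12 * (det2 p q + det2 q r + det2 p r) ^ 2 := by linarith
      _ ≤ l ^ 4 := hiso
  refine le_trans ?_ hper
  rw [frontier_image_similarity hs hf]
  calc μH[1] (f '' frontier stdHexagon)
      ≤ ENNReal.ofReal s * μH[1] (frontier stdHexagon) :=
        hausdorffMeasure_image_similarity_le hs hf _
    _ ≤ ENNReal.ofReal s * ENNReal.ofReal 6 := by
        gcongr
        exact hausdorffMeasure_frontier_stdHexagon_le
    _ = ENNReal.ofReal (s * 6) := (ENNReal.ofReal_mul hs.le).symm
    _ ≤ ENNReal.ofReal (2 * l) := ENNReal.ofReal_le_ofReal (by linarith)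
end
end
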